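/- arXiv:2210.06214 — 3 statements merged into one kernel-verified Lean document; each statement's English description precedes it below -/
import Mathlib

section
/- For every positive integer v, if there exists an RDSQS(v + 1) (a Steiner quadruple system of order v + 1 whose derived design at every point is resolvable), then there exists an LKTS(3v) (a large set of Kirkman triple systems of order 3v). -/
open Finset

/-- A parallel class on point set `Y`: a collection of blocks that partitions `Y`. -/
def IsParallelClass (Y : Finset ℕ) (P : Finset (Finset ℕ)) : Prop :=
  (∀ b ∈ P, b ⊆ Y) ∧ ∀ y ∈ Y, ∃! b, b ∈ P ∧ y ∈ b

/-- A block collection `B` on point set `Y` is resolvable if it can be partitioned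
into parallel classes of `Y`. -/
def Resolvable (Y : Finset ℕ) (B : Finset (Finset ℕ)) : Prop :=
  ∃ (r : ℕ) (P : Fin r → Finset (Finset ℕ)),
    (∀ i, IsParallelClass Y (P i)) ∧ (∀ i, P i ⊆ B) ∧ ∀ b ∈ B, ∃! i, b ∈ P i

/-- The blocks of the derived design at a point `x`:
`{B \ {x} : x ∈ B, B ∈ B}`. -/
def derivedBlocks (B : Finset (Finset ℕ)) (x : ℕ) : Finset (Finset ℕ) :=
  (B.filter fun b => x ∈ b).image fun b => b.erase x

/-- A Steiner system S(t, k, v) on point set `X` with block collection `B`. -/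
def IsSteiner (t k v : ℕ) (X : Finset ℕ) (B : Finset (Finset ℕ)) : Prop :=
  X.card = v ∧ (∀ b ∈ B, b ⊆ X ∧ b.card = k) ∧
  ∀ T ⊆ X, T.card = t → ∃! b, b ∈ B ∧ T ⊆ b

/-- An RDS(t, k, v): a Steiner system S(t, k, v) whose derived design at every
point is resolvable. -/
def IsRDS (t k v : ℕ) (X : Finset ℕ) (B : Finset (Finset ℕ)) : Prop :=
  IsSteiner t k v X B ∧ ∀ x ∈ X, Resolvable (X.erase x) (derivedBlocks B x)

/-- Existence of an RDS(t, k, v). -/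
def ExistsRDS (t k v : ℕ) : Prop := ∃ X B, IsRDS t k v X B

/-- Existence of an RDSQS(v), i.e. an RDS(3, 4, v). -/
def ExistsRDSQS (v : ℕ) : Prop := ExistsRDS 3 4 v

/-- A Kirkman triple system KTS(v): a resolvable Steiner triple system. -/
def IsKTS (v : ℕ) (X : Finset ℕ) (B : Finset (Finset ℕ)) : Prop :=
  IsSteiner 2 3 v X B ∧ Resolvable X B

/-- Existence of a large set of Kirkman triple systems LKTS(v): a partition of
all 3-element subsets of a v-element set into v - 2 classes, each a KTS(v). -/
def ExistsLKTS (v : ℕ) : Prop :=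
  ∃ (X : Finset ℕ) (C : Fin (v - 2) → Finset (Finset ℕ)),
    X.card = v ∧ (∀ i, IsKTS v X (C i)) ∧
    (∀ T : Finset ℕ, (T ⊆ X ∧ T.card = 3) ↔ ∃ i, T ∈ C i) ∧
    ∀ (T : Finset ℕ) (i j : Fin (v - 2)), T ∈ C i → T ∈ C j → i = j

/-- A t-wise balanced design S(t, K, v) with block sizes from the set `K`. -/
def IsTBD (t : ℕ) (K : Set ℕ) (v : ℕ) (X : Finset ℕ) (B : Finset (Finset ℕ)) : Prop :=
  X.card = v ∧ (∀ b ∈ B, b ⊆ X ∧ b.card ∈ K) ∧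
  ∀ T ⊆ X, T.card = t → ∃! b, b ∈ B ∧ T ⊆ b

/-- A group divisible design GDD(t, K, g*n) of type g^n: `Gs` is a partition of
`X` into `n` groups of size `g`; blocks have sizes in `K`, meet every group in
at most one point, and every t-subset of `X` meeting every group in at most one
point lies in exactly one block. -/
def IsGDD (t : ℕ) (K : Set ℕ) (g n : ℕ) (X : Finset ℕ)
    (Gs Bs : Finset (Finset ℕ)) : Prop :=
  X.card = g * n ∧ Gs.card = n ∧
  (∀ G ∈ Gs, G ⊆ X ∧ G.card = g) ∧
  (∀ x ∈ X, ∃! G, G ∈ Gs ∧ x ∈ G) ∧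
  (∀ b ∈ Bs, b ⊆ X ∧ b.card ∈ K) ∧
  (∀ b ∈ Bs, ∀ G ∈ Gs, (b ∩ G).card ≤ 1) ∧
  ∀ T ⊆ X, T.card = t → (∀ G ∈ Gs, (T ∩ G).card ≤ 1) → ∃! b, b ∈ Bs ∧ T ⊆ b

/-- An RDGDD(t, K, g*n) of type g^n: a GDD whose derived design at every point
(on point set `X \ G`, where `G` is the group of the point) is resolvable. -/
def IsRDGDD (t : ℕ) (K : Set ℕ) (g n : ℕ) (X : Finset ℕ)
    (Gs Bs : Finset (Finset ℕ)) : Prop :=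
  IsGDD t K g n X Gs Bs ∧
  ∀ x ∈ X, ∀ G ∈ Gs, x ∈ G → Resolvable (X \ G) (derivedBlocks Bs x)

/-- An RDSQS*(v): an SQS(v) with v ≡ 1 (mod 3) such that, for every point `x`,
the derived blocks at `x` contain a parallel class `P'` (enumerated by `Bk`);
the multiset consisting of each triple of `P'` three times and each remaining
derived triple twice can be partitioned into (v-1) parallel classes
`P k l` (k ranging over Fin ((v-1)/3), l over Fin 3); and for each `k` the three
parallel classes `P k l` share the common triple `Bk k`. -/
def IsRDSQSstar (v : ℕ) (X : Finset ℕ) (B : Finset (Finset ℕ)) : Prop :=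
  IsSteiner 3 4 v X B ∧ v % 3 = 1 ∧
  ∀ x ∈ X, ∃ (P' : Finset (Finset ℕ)) (Bk : Fin ((v - 1) / 3) → Finset ℕ)
    (P : Fin ((v - 1) / 3) → Fin 3 → Finset (Finset ℕ)),
    P' ⊆ derivedBlocks B x ∧
    IsParallelClass (X.erase x) P' ∧
    (∀ k, Bk k ∈ P') ∧
    (∀ b ∈ P', ∃ k, Bk k = b) ∧
    Function.Injective Bk ∧
    (∀ k l, IsParallelClass (X.erase x) (P k l)) ∧
    ((∑ k, ∑ l, (P k l).val) =
        3 • P'.val + 2 • ((derivedBlocks B x) \ P').val) ∧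
    ∀ k l, Bk k ∈ P k l

open Finset

namespace LK

/-- The large set of the nine points over a block through both special points:
seven systems, each listed as four parallel classes of three triples. -/
def tbl : List ℕ := [14, 485, 1113, 45, 199, 356, 56, 213, 331, 67, 188, 345, 19, 341, 537, 27, 200, 813, 57, 185, 380, 68, 177, 487, 176, 41, 669, 16, 357, 524, 211, 328, 105, 189, 31, 644, 33, 184, 812, 173, 43, 681, 332, 53, 237, 343, 20, 501, 500, 172, 93, 40, 355, 249, 333, 17, 668, 187, 645, 32, 489, 29, 236, 197, 44, 381, 55, 171, 825, 344, 499, 21, 643, 15, 393, 329, 201, 92, 212, 28, 525, 69, 488, 175]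

def look : List ℕ → ℕ → ℕ → ℕ
  | [], _, n => n
  | a :: L, k, n => bif Nat.beq a k then n else look L k (n + 1)

/-- The local colouring: the colour and the class label of a triple of codes
`p < q < r`; the result is `16 * x + 4 * i + t`. -/
def loc (w f : Bool) (p q r : ℕ) : ℕ :=
  let a := p / 3
  let b := q / 3
  let c := r / 3
  let j := p % 3
  let k := q % 3
  let l := r % 3
  bif w then
    bif f then
      let n := look tbl (p * 144 + q * 12 + r) 0
      bif Nat.blt n 12 then 48 + n / 3 else ((n - 12) / 36) * 16 + ((n - 12) % 36) / 3
    else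
      let x := 6 - a - b - c
      let al := bif Nat.beq x 3 then 2 else x
      bif Nat.beq b 2 then 16 * x + 4 * ((al + k + 2 * j + 2 * l) % 3) + ((j + 2 * l) % 3 + 1)
      else bif Nat.beq c 2 then 16 * x + 4 * ((al + l + 2 * j + 2 * k) % 3) + ((j + 2 * k) % 3 + 1)
      else bif Nat.beq ((j + k + l) % 3) 0 then 4 * j + ((k + 2 * l) % 3 + 1)
      else bif Nat.beq ((j + k + l) % 3) 1 then 16 + 4 * k + ((j + 2 * l) % 3 + 1)
      else 48 + 4 * l + ((j + 2 * k) % 3 + 1)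
  else
    bif f then
      bif Nat.beq c 3 then 16 * (3 - a - b) + 4 * ((2 * j + 2 * k) % 3) + ((1 + j + 2 * k) % 3 + 1)
      else bif Nat.beq a b then
        bif Nat.beq ((j + k + l) % 3) 0 then 16 * (3 - a - c) + 4 * l
        else
          let o := j + k - l
          16 * c + 4 * o + (bif Bool.xor (Nat.blt a (3 - a - c)) (Nat.beq l ((o + 1) % 3)) then 1 else 3)
      else bif Nat.beq b c then
        bif Nat.beq ((j + k + l) % 3) 0 then 16 * (3 - a - c) + 4 * j
        else
          let o := k + l - j
          16 * a + 4 * o + (bif Bool.xor (Nat.blt b (3 - a - b)) (Nat.beq j ((o + 1) % 3)) then 1 else 3)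
      else bif Nat.beq ((j + k + l) % 3) 0 then 48 + ((j + 2 * k) % 3 + 1)
      else bif Nat.beq j k then 32 + 4 * ((2 * j + 2 * l) % 3) + 2
      else bif Nat.beq j l then 16 + 4 * ((2 * j + 2 * k) % 3) + 2
      else 4 * ((2 * j + 2 * k) % 3) + 2
    else 16 * (6 - a - b - c) + 4 * ((j + k + l) % 3) + ((j + 2 * k) % 3 + 1)

/-- Symmetrised version. -/
def lc (w f : Bool) (p q r : ℕ) : ℕ :=
  bif Nat.ble p q then
    bif Nat.ble q r then loc w f p q r
    else bif Nat.ble p r then loc w f p r q else loc w f r p q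
  else
    bif Nat.ble p r then loc w f q p r
    else bif Nat.ble q r then loc w f q r p else loc w f r q p

/-- Valid point codes. -/
def vp (w f : Bool) (p : ℕ) : Bool :=
  (!(f && Nat.beq (p / 3) 3) || Nat.beq (p % 3) 0) &&
    (!(w && Nat.beq (p / 3) 2) || !(Nat.beq (p % 3) 0))

/-- Valid systems. -/
def vs (w f : Bool) (x i : ℕ) : Bool :=
  !(w && Nat.beq x 2) && (!(f && Nat.beq x 3) || Nat.beq i 0)

def two (a b : ℕ) : Bool := !(Nat.beq a b) && !(Nat.beq a 3) && !(Nat.beq b 3)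

/-- The triples that belong to a block. -/
def bel (w f : Bool) (a b c : ℕ) : Bool :=
  (!(Nat.beq a b) && !(Nat.beq a c) && !(Nat.beq b c)) ||
    (f && (two a b || two a c || two b c || w))

def codes : List ℕ := [0, 1, 2, 3, 4, 5, 6, 7, 8, 9, 10, 11]

def exB (w f : Bool) (p q s : ℕ) : Bool :=
  codes.any fun r => vp w f r && !(Nat.beq r p) && !(Nat.beq r q) &&
    bel w f (p / 3) (q / 3) (r / 3) && Nat.beq (lc w f p q r / 4) s

def exR (w f : Bool) (p s : ℕ) : Bool :=
  codes.any fun q => vp w f q && !(Nat.beq q p) &&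
  codes.any fun r => Nat.blt q r && vp w f r && !(Nat.beq r p) &&
    bel w f (p / 3) (q / 3) (r / 3) && Nat.beq (lc w f p q r) s

def condB (w f : Bool) (p q x i : ℕ) : Bool :=
  let a := p / 3
  let b := q / 3
  (w && f) || (!(Nat.beq a b) && !(Nat.beq a x) && !(Nat.beq b x)) ||
  (f && !(Nat.beq x 3) && Nat.beq a b && !(Nat.beq a x) && !(Nat.beq a 3)) ||
  (Nat.beq b x && !(Nat.beq a x) && !(Nat.beq a 3 && f) && !(Nat.beq a 2 && w) &&
    !(Nat.beq x 3 && f) && ((f && !(Nat.beq (q % 3) i)) || (w && Nat.beq (q % 3) i)))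

def condR (w f : Bool) (p x i t : ℕ) : Bool :=
  let a := p / 3
  (w && f) ||
  (!(Nat.beq t 0) && ((!(Nat.beq a x) && !(w && Nat.beq a 2) && !(f && Nat.beq a 3)) ||
    (f && !(Nat.beq x 3) && (Nat.beq a 3 || (Nat.beq a x && !(Nat.beq (p % 3) i)))) ||
    (w && (Nat.beq a 2 || (Nat.beq a x && Nat.beq (p % 3) i))))) ||
  (Nat.beq t 0 && f && !(Nat.beq x 3) && !(Nat.beq a x) && !(Nat.beq a 3))

def chkB (w f : Bool) : Bool :=
  [0, 1, 2, 3].all fun x => [0, 1, 2].all fun i => !(vs w f x i) ||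
  codes.all fun p => !(vp w f p) || codes.all fun q => !(vp w f q) || Nat.beq p q ||
    !(condB w f p q x i) || exB w f p q (4 * x + i)

def chkR (w f : Bool) : Bool :=
  [0, 1, 2, 3].all fun x => [0, 1, 2].all fun i => !(vs w f x i) ||
  codes.all fun p => !(vp w f p) || [0, 1, 2, 3].all fun t =>
    !(condR w f p x i t) || exR w f p (16 * x + 4 * i + t)

theorem chkB_ok : ∀ w f, chkB w f = true := by decide +kernel
theorem chkR_ok : ∀ w f, chkR w f = true := by decide +kernel

theorem exists_lkts_of_col {α S L : Type} [Fintype α] [DecidableEq α] [Fintype S] [DecidableEq S]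
    [Fintype L] [DecidableEq L] (n m : ℕ) (hn : Fintype.card α = n) (hS : Fintype.card S = n - 2)
    (hL : Fintype.card L = m) (hnm : n = 2 * m + 1)
    (F : α → α → α → S × L) (sym1 : ∀ p q r, F p q r = F q p r) (sym2 : ∀ p q r, F p q r = F p r q)
    (HB : ∀ s p q, p ≠ q → ∃ r, r ≠ p ∧ r ≠ q ∧ (F p q r).1 = s)
    (HR : ∀ s l p, ∃ q r, q ≠ p ∧ r ≠ p ∧ r ≠ q ∧ F p q r = (s, l)) :
    ExistsLKTS n := by
  classical
  -- injectivity of colours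
  have inj : ∀ p q r r', p ≠ q → r ≠ p → r ≠ q → r' ≠ p → r' ≠ q →
      (F p q r).1 = (F p q r').1 → r = r' := by
    intro p q r r' hpq h1 h2 h3 h4 he
    have hsurj : Set.SurjOn (fun r => (F p q r).1) ((univ \ {p, q} : Finset α) : Set α)
        ((univ : Finset S) : Set S) := by
      intro s _
      obtain ⟨r, h1, h2, h3⟩ := HB s p q hpq
      exact ⟨r, by simp [h1, h2], h3⟩
    have hc : (univ \ {p, q} : Finset α).card ≤ (univ : Finset S).card := by
      rw [card_sdiff_of_subset (by simp), card_pair hpq, card_univ, card_univ, hn, hS]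
    exact Finset.injOn_of_surjOn_of_card_le _ (fun _ _ => by simp) hsurj hc
      (by simp [h1, h2]) (by simp [h3, h4]) he
  -- uniqueness in parallel classes
  have uni : ∀ p q r q' r' s l, q ≠ p → r ≠ p → r ≠ q → q' ≠ p → r' ≠ p → r' ≠ q' →
      F p q r = (s, l) → F p q' r' = (s, l) → ({q, r} : Finset α) = {q', r'} := by
    intro p q r q' r' s l h1 h2 h3 h1' h2' h3' hF hF'
    have hex : ∀ q, ∃ r, q ≠ p → r ≠ p ∧ r ≠ q ∧ (F p q r).1 = s := by
      intro q
      by_cases hq : q = p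
      · exact ⟨p, fun h => absurd hq h⟩
      · obtain ⟨r, a, b, c⟩ := HB s p q (Ne.symm hq)
        exact ⟨r, fun _ => ⟨a, b, c⟩⟩
    choose g hg using hex
    have hgu : ∀ q r, q ≠ p → r ≠ p → r ≠ q → (F p q r).1 = s → g q = r := by
      intro q r a b c d
      obtain ⟨a', b', c'⟩ := hg q a
      exact inj p q _ _ (Ne.symm a) a' b' b c (c'.trans d.symm)
    let h : α → L := fun q => (F p q (g q)).2
    have hh : ∀ q r l, q ≠ p → r ≠ p → r ≠ q → F p q r = (s, l) → h q = l ∧ h r = l := by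
      intro q r l a b c d
      have e1 := hgu q r a b c (by rw [d])
      have e2 := hgu r q b a (Ne.symm c) (by rw [sym2, d])
      refine ⟨?_, ?_⟩
      · simp only [h, e1, d]
      · simp only [h, e2]; rw [sym2, d]
    have hfib : ∀ l ∈ (univ : Finset L), 2 ≤ (((univ : Finset α).erase p).filter (fun q => h q = l)).card := by
      intro l _
      obtain ⟨q, r, a, b, c, d⟩ := HR s l p
      obtain ⟨e1, e2⟩ := hh q r l a b c d
      calc 2 = ({q, r} : Finset α).card := (card_pair (Ne.symm c)).symm
        _ ≤ _ := card_le_card (by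
          intro z hz
          simp only [mem_insert, mem_singleton] at hz
          rcases hz with rfl | rfl <;> simp [*])
    have hsum : ∑ l : L, (((univ : Finset α).erase p).filter (fun q => h q = l)).card = ∑ l : L, 2 := by
      rw [← card_eq_sum_card_fiberwise (fun _ _ => by simp)]
      simp [card_erase_of_mem, hn, hL]; omega
    have hall := (Finset.sum_eq_sum_iff_of_le hfib).1 hsum.symm l (mem_univ _)
    have key : ∀ q r, q ≠ p → r ≠ p → r ≠ q → F p q r = (s, l) →
        ({q, r} : Finset α) = ((univ : Finset α).erase p).filter (fun q => h q = l) := by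
      intro q r a b c d
      obtain ⟨e1, e2⟩ := hh q r l a b c d
      apply eq_of_subset_of_card_le
      · intro z hz
        simp only [mem_insert, mem_singleton] at hz
        rcases hz with rfl | rfl <;> simp [*]
      · rw [← hall, card_pair (Ne.symm c)]
    rw [key q r h1 h2 h3 hF, key q' r' h1' h2' h3' hF']
  -- coordinates
  let g : α → ℕ := fun a => (Fintype.equivFin α a : ℕ)
  have hg : Function.Injective g := fun a b h => (Fintype.equivFin α).injective (Fin.ext h)
  let X : Finset ℕ := univ.image g
  have hX : X.card = n := by rw [card_image_of_injective _ hg, card_univ, hn]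
  let R : Finset ℕ → S → L → Prop := fun T s l =>
    ∃ p q r, q ≠ p ∧ r ≠ p ∧ r ≠ q ∧ T = {g p, g q, g r} ∧ F p q r = (s, l)
  have sym3 : ∀ p q r, F p q r = F r q p := by
    intro p q r; rw [sym1, sym2, sym1]
  have front : ∀ T s l x, R T s l → g x ∈ T →
      ∃ q r, q ≠ x ∧ r ≠ x ∧ r ≠ q ∧ T = {g x, g q, g r} ∧ F x q r = (s, l) := by
    rintro T s l x ⟨p, q, r, h1, h2, h3, rfl, hF⟩ hx
    simp only [mem_insert, mem_singleton, hg.eq_iff] at hx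
    rcases hx with rfl | rfl | rfl
    · exact ⟨q, r, h1, h2, h3, rfl, hF⟩
    · exact ⟨p, r, h1.symm, h3, h2, by ext; simp; tauto, by rw [← hF, sym1]⟩
    · exact ⟨q, p, h3.symm, h2.symm, h1.symm, by ext; simp; tauto, by rw [← hF, sym3]⟩
  have front2 : ∀ T s l x y, R T s l → x ≠ y → g x ∈ T → g y ∈ T →
      ∃ r, r ≠ x ∧ r ≠ y ∧ T = {g x, g y, g r} ∧ F x y r = (s, l) := by
    intro T s l x y hR hxy hx hy
    obtain ⟨q, r, h1, h2, h3, rfl, hF⟩ := front T s l x hR hx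
    simp only [mem_insert, mem_singleton, hg.eq_iff] at hy
    rcases hy with rfl | rfl | rfl
    · exact absurd rfl hxy
    · exact ⟨r, h2, h3, rfl, hF⟩
    · exact ⟨q, h1, h3.symm, by ext; simp; tauto, by rw [← hF, sym2]⟩
  have func : ∀ T s l s' l', R T s l → R T s' l' → s = s' ∧ l = l' := by
    rintro T s l s' l' ⟨p, q, r, h1, h2, h3, rfl, hF⟩ hR
    obtain ⟨r', a, b, c, d⟩ := front2 _ s' l' p q hR h1.symm (by simp) (by simp)
    have : g r ∈ ({g p, g q, g r'} : Finset ℕ) := by rw [← c]; simp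
    simp only [mem_insert, mem_singleton, hg.eq_iff] at this
    rcases this with e | e | e
    · exact absurd e h2
    · exact absurd e h3
    · subst e; rw [hF] at d; simpa using d
  have Rsub : ∀ T s l, R T s l → T ⊆ X ∧ T.card = 3 := by
    rintro T s l ⟨p, q, r, h1, h2, h3, rfl, hF⟩
    refine ⟨?_, ?_⟩
    · intro z hz
      simp only [mem_insert, mem_singleton] at hz
      rcases hz with rfl | rfl | rfl <;> simp [X]
    · exact card_eq_three.2 ⟨_, _, _, fun h => h1 (hg h).symm, fun h => h2 (hg h).symm,
        fun h => h3 (hg h).symm, rfl⟩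
  let C : S → Finset (Finset ℕ) := fun s => (X.powersetCard 3).filter (fun T => ∃ l, R T s l)
  have memC : ∀ T s, T ∈ C s ↔ ∃ l, R T s l := by
    intro T s
    simp only [C, mem_filter, mem_powersetCard, and_iff_right_iff_imp]
    rintro ⟨l, h⟩
    exact Rsub T s l h
  let P : S → L → Finset (Finset ℕ) := fun s l => (X.powersetCard 3).filter (fun T => R T s l)
  have memP : ∀ T s l, T ∈ P s l ↔ R T s l := by
    intro T s l
    simp only [P, mem_filter, mem_powersetCard, and_iff_right_iff_imp]
    exact fun h => Rsub T s l h
  have memX : ∀ y ∈ X, ∃ a, g a = y := by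
    intro y hy; simpa [X] using hy
  let eS : Fin (n - 2) ≃ S := (Fintype.equivFinOfCardEq hS).symm
  let eL : Fin m ≃ L := (Fintype.equivFinOfCardEq hL).symm
  refine ⟨X, fun i => C (eS i), hX, ?_, ?_, ?_⟩
  · intro i
    show IsKTS n X (C (eS i))
    generalize eS i = s
    refine ⟨⟨hX, ?_, ?_⟩, m, fun j => P s (eL j), ?_, ?_, ?_⟩
    · intro b hb
      obtain ⟨l, h⟩ := (memC _ _).1 hb
      exact Rsub _ _ _ h
    · intro T hT hc
      obtain ⟨x, y, hxy, rfl⟩ := card_eq_two.1 hc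
      obtain ⟨p, rfl⟩ := memX x (hT (by simp))
      obtain ⟨q, rfl⟩ := memX y (hT (by simp))
      have hpq : p ≠ q := fun h => hxy (by rw [h])
      obtain ⟨r, h1, h2, h3⟩ := HB s p q hpq
      refine ⟨{g p, g q, g r}, ⟨(memC _ _).2 ⟨(F p q r).2, p, q, r, hpq.symm, h1, h2, rfl, ?_⟩, ?_⟩, ?_⟩
      · rw [← h3]
      · intro z; simp; tauto
      · rintro b ⟨hb, hTb⟩
        obtain ⟨l, hR⟩ := (memC _ _).1 hb
        obtain ⟨r', a, b', c, d⟩ := front2 _ _ _ p q hR hpq (hTb (by simp)) (hTb (by simp))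
        have := inj p q r r' hpq h1 h2 a b' (by rw [h3, d])
        rw [c, this]
    · intro j
      refine ⟨fun b hb => (Rsub _ _ _ ((memP _ _ _).1 hb)).1, ?_⟩
      intro y hy
      obtain ⟨p, rfl⟩ := memX y hy
      obtain ⟨q, r, h1, h2, h3, hF⟩ := HR s (eL j) p
      refine ⟨{g p, g q, g r}, ⟨(memP _ _ _).2 ⟨p, q, r, h1, h2, h3, rfl, hF⟩, by simp⟩, ?_⟩
      rintro b ⟨hb, hpb⟩
      obtain ⟨q', r', h1', h2', h3', rfl, hF'⟩ := front _ _ _ p ((memP _ _ _).1 hb) hpb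
      have := uni p q' r' q r s _ h1' h2' h3' h1 h2 h3 hF' hF
      have h := congrArg (fun Q : Finset α => insert (g p) (Q.image g)) this
      simpa [image_insert] using h
    · intro j b hb
      exact (memC _ _).2 ⟨_, (memP _ _ _).1 hb⟩
    · intro b hb
      obtain ⟨l, hR⟩ := (memC _ _).1 hb
      refine ⟨eL.symm l, by simpa [memP] using hR, ?_⟩
      intro j hj
      have := (func _ _ _ _ _ ((memP _ _ _).1 hj) hR).2
      rw [← this]; simp
  · intro T
    constructor
    · rintro ⟨hT, hc⟩
      obtain ⟨x, y, z, hxy, hxz, hyz, rfl⟩ := card_eq_three.1 hc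
      obtain ⟨p, rfl⟩ := memX x (hT (by simp))
      obtain ⟨q, rfl⟩ := memX y (hT (by simp))
      obtain ⟨r, rfl⟩ := memX z (hT (by simp))
      refine ⟨eS.symm (F p q r).1, (memC _ _).2 ⟨(F p q r).2, p, q, r, ?_, ?_, ?_, rfl, by simp⟩⟩
      · rintro rfl; exact hxy rfl
      · rintro rfl; exact hxz rfl
      · rintro rfl; exact hyz rfl
    · rintro ⟨i, hi⟩
      obtain ⟨l, h⟩ := (memC _ _).1 hi
      exact Rsub _ _ _ h
  · intro T i j hi hj
    obtain ⟨l, h⟩ := (memC _ _).1 hi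
    obtain ⟨l', h'⟩ := (memC _ _).1 hj
    exact eS.injective (func _ _ _ _ _ h h').1

theorem exists_lkts_three : ExistsLKTS 3 := by
  have h1 : ∀ p q : Fin 3, p ≠ q → ∃ r, r ≠ p ∧ r ≠ q := by decide
  have h2 : ∀ p : Fin 3, ∃ q r : Fin 3, q ≠ p ∧ r ≠ p ∧ r ≠ q := by decide
  refine exists_lkts_of_col (α := Fin 3) (S := Unit) (L := Unit) 3 1 (by simp) (by simp) (by simp)
    (by norm_num) (fun _ _ _ => ((), ())) (fun _ _ _ => rfl) (fun _ _ _ => rfl) ?_ ?_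
  · intro s p q h
    obtain ⟨r, a, b⟩ := h1 p q h
    exact ⟨r, a, b, rfl⟩
  · intro s l p
    obtain ⟨q, r, a, b, c⟩ := h2 p
    exact ⟨q, r, a, b, c, rfl⟩

theorem lc_sym1 (w f : Bool) (p q r : ℕ) : lc w f p q r = lc w f q p r := by
  unfold lc
  rcases lt_trichotomy p q with h | h | h
  · have h1 : Nat.ble p q = true := by rw [Nat.ble_eq]; exact h.le
    have h2 : Nat.ble q p = false := by
      rw [← Bool.not_eq_true, Nat.ble_eq]; omega
    simp [h1, h2]
  · subst h; rfl
  · have h1 : Nat.ble q p = true := by rw [Nat.ble_eq]; exact h.le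
    have h2 : Nat.ble p q = false := by
      rw [← Bool.not_eq_true, Nat.ble_eq]; omega
    simp [h1, h2]

theorem lc_sym2 (w f : Bool) (p q r : ℕ) : lc w f p q r = lc w f p r q := by
  unfold lc
  have hb : ∀ a b : ℕ, Nat.ble a b = decide (a ≤ b) := by
    intro a b
    rw [Bool.eq_iff_iff]; simp
  simp only [hb]
  rcases lt_trichotomy q r with h | h | h
  · by_cases h1 : p ≤ q
    · have : p ≤ r := by omega
      have h2 : ¬ r ≤ q := by omega
      simp [h1, this, h2, h.le]
    · by_cases h3 : p ≤ r
      · have h2 : ¬ r ≤ q := by omega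
        simp [h1, h3, h2]
      · have h2 : ¬ r ≤ q := by omega
        simp [h1, h3, h2, h.le]
  · subst h; rfl
  · by_cases h1 : p ≤ r
    · have : p ≤ q := by omega
      have h2 : ¬ q ≤ r := by omega
      simp [h1, this, h2, h.le]
    · by_cases h3 : p ≤ q
      · have h2 : ¬ q ≤ r := by omega
        simp [h1, h3, h2]
      · have h2 : ¬ q ≤ r := by omega
        simp [h1, h3, h2, h.le]

theorem mem_codes (p : ℕ) : p ∈ codes ↔ p < 12 := by
  simp [codes]; omega

theorem localB (w f : Bool) (p q x i : ℕ) (hp : p < 12) (hq : q < 12) (hx : x < 4) (hi : i < 3)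
    (hs : vs w f x i = true) (hvp : vp w f p = true) (hvq : vp w f q = true) (hpq : p ≠ q)
    (hc : condB w f p q x i = true) :
    ∃ r < 12, vp w f r = true ∧ r ≠ p ∧ r ≠ q ∧ bel w f (p / 3) (q / 3) (r / 3) = true ∧
      lc w f p q r / 4 = 4 * x + i := by
  have h := chkB_ok w f
  unfold chkB at h
  rw [List.all_eq_true] at h
  have h := h x (by simp; omega)
  rw [List.all_eq_true] at h
  have h := h i (by simp; omega)
  rw [hs, Bool.not_true, Bool.false_or, List.all_eq_true] at h
  have h := h p ((mem_codes p).2 hp)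
  rw [hvp, Bool.not_true, Bool.false_or, List.all_eq_true] at h
  have h := h q ((mem_codes q).2 hq)
  have hne : Nat.beq p q = false := by
    rw [← Bool.not_eq_true, Nat.beq_eq]; exact hpq
  rw [hvq, hc, hne, Bool.not_true, Bool.false_or, Bool.false_or, Bool.false_or] at h
  unfold exB at h
  rw [List.any_eq_true] at h
  obtain ⟨r, hr, h⟩ := h
  simp only [Bool.and_eq_true, Bool.not_eq_true', ← Bool.not_eq_true, Nat.beq_eq] at h
  obtain ⟨⟨⟨⟨h1, h2⟩, h3⟩, h4⟩, h5⟩ := h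
  exact ⟨r, (mem_codes r).1 hr, h1, h2, h3, h4, h5⟩

theorem localR (w f : Bool) (p x i t : ℕ) (hp : p < 12) (hx : x < 4) (hi : i < 3) (ht : t < 4)
    (hs : vs w f x i = true) (hvp : vp w f p = true)
    (hc : condR w f p x i t = true) :
    ∃ q < 12, ∃ r < 12, vp w f q = true ∧ vp w f r = true ∧ q ≠ p ∧ r ≠ p ∧ r ≠ q ∧
      bel w f (p / 3) (q / 3) (r / 3) = true ∧
      lc w f p q r = 16 * x + 4 * i + t := by
  have h := chkR_ok w f
  unfold chkR at h
  rw [List.all_eq_true] at h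
  have h := h x (by simp; omega)
  rw [List.all_eq_true] at h
  have h := h i (by simp; omega)
  rw [hs, Bool.not_true, Bool.false_or, List.all_eq_true] at h
  have h := h p ((mem_codes p).2 hp)
  rw [hvp, Bool.not_true, Bool.false_or, List.all_eq_true] at h
  have h := h t (by simp; omega)
  rw [hc, Bool.not_true, Bool.false_or] at h
  unfold exR at h
  rw [List.any_eq_true] at h
  obtain ⟨q, hq, h⟩ := h
  simp only [Bool.and_eq_true, List.any_eq_true] at h
  obtain ⟨⟨h1, h2⟩, r, hr, h⟩ := h
  simp only [Bool.and_eq_true, Bool.not_eq_true', ← Bool.not_eq_true, Nat.beq_eq, Nat.blt_eq] at h h2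
  obtain ⟨⟨⟨⟨h3, h4⟩, h5⟩, h6⟩, h7⟩ := h
  exact ⟨q, (mem_codes q).1 hq, r, (mem_codes r).1 hr, h1, h4, h2, h5, by omega, h6, h7⟩

theorem lc_special : ∀ p ∈ [7, 8, 9], ∀ q ∈ [7, 8, 9], ∀ r ∈ [7, 8, 9], p ≠ q → p ≠ r → q ≠ r →
    lc true true p q r = 48 := by decide +kernel


/-- A quadruple system with two special points and resolutions of the derived designs. -/
structure Dat (V B : Type) (k : ℕ) where
  inf : V
  om : V
  z0 : V
  e : B → ℕ → V
  rho : V → B → Fin k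
  hio : inf ≠ om
  hz1 : z0 ≠ inf
  hz2 : z0 ≠ om
  hinj : ∀ β m n, m < 4 → n < 4 → e β m = e β n → m = n
  hblk : ∀ a b c, a ≠ b → a ≠ c → b ≠ c →
    ∃ β, (∃ n < 4, e β n = a) ∧ (∃ n < 4, e β n = b) ∧ (∃ n < 4, e β n = c)
  huniq : ∀ a b c, a ≠ b → a ≠ c → b ≠ c → ∀ β γ,
    (∃ n < 4, e β n = a) → (∃ n < 4, e β n = b) → (∃ n < 4, e β n = c) →
    (∃ n < 4, e γ n = a) → (∃ n < 4, e γ n = b) → (∃ n < 4, e γ n = c) → β = γ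
  hinf : ∀ β, (∃ n < 4, e β n = inf) → e β 3 = inf
  hom : ∀ β, (∃ n < 4, e β n = om) → e β 2 = om
  hrho : ∀ x a, x ≠ a → ∀ r, ∃ β, (∃ n < 4, e β n = x) ∧ (∃ n < 4, e β n = a) ∧ rho x β = r

namespace Dat

variable {V B : Type} {k : ℕ} (D : Dat V B k)

def Mem (β : B) (a : V) : Prop := ∃ n < 4, D.e β n = a

abbrev Pt := {p : V × Fin 3 // (p.1 = D.inf → p.2 = 0) ∧ (p.1 = D.om → p.2 ≠ 0)}

abbrev Sy := Option ({y : V // y ≠ D.inf ∧ y ≠ D.om} × Fin 3)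

abbrev La (_ : Dat V B k) := Option (Fin k × Fin 3)

open Classical in
noncomputable def pos (β : B) (a : V) : ℕ := if h : D.Mem β a then h.choose else 0

open Classical in
noncomputable def w (β : B) : Bool := decide (D.Mem β D.om)

open Classical in
noncomputable def f (β : B) : Bool := decide (D.Mem β D.inf)

noncomputable def code (β : B) (p : D.Pt) : ℕ := 3 * D.pos β p.1.1 + p.1.2.1

open Classical in
noncomputable def sys (x : V) (i : Fin 3) : D.Sy :=
  if h : x ≠ D.inf ∧ x ≠ D.om then some (⟨x, h⟩, i) else none

noncomputable def tr (β : B) (N : ℕ) : D.Sy × D.La :=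
  (D.sys (D.e β (N / 16)) (Fin.ofNat 3 (N / 4 % 4)),
    if N % 4 = 0 then none else some (D.rho (D.e β (N / 16)) β, Fin.ofNat 3 (N % 4 - 1)))

def Two (a b : V) : Prop := a ≠ b ∧ a ≠ D.inf ∧ b ≠ D.inf

def Bel (β : B) (p q r : D.Pt) : Prop :=
  D.Mem β p.1.1 ∧ D.Mem β q.1.1 ∧ D.Mem β r.1.1 ∧
  ((p.1.1 ≠ q.1.1 ∧ p.1.1 ≠ r.1.1 ∧ q.1.1 ≠ r.1.1) ∨
    (D.Mem β D.inf ∧ (D.Two p.1.1 q.1.1 ∨ D.Two p.1.1 r.1.1 ∨ D.Two q.1.1 r.1.1 ∨ D.Mem β D.om)))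

noncomputable def col (β : B) (p q r : D.Pt) : D.Sy × D.La :=
  D.tr β (lc (D.w β) (D.f β) (D.code β p) (D.code β q) (D.code β r))

noncomputable def F [Nonempty B] (p q r : D.Pt) : D.Sy × D.La :=
  D.col (Classical.epsilon fun β => D.Bel β p q r) p q r

theorem two_comm (a b : V) : D.Two a b ↔ D.Two b a := by
  unfold Two; constructor <;> rintro ⟨h1, h2, h3⟩ <;> exact ⟨h1.symm, h3, h2⟩

theorem bel_sym1 (β : B) (p q r : D.Pt) : D.Bel β p q r ↔ D.Bel β q p r := by
  unfold Bel
  rw [D.two_comm p.1.1 q.1.1, ne_comm (a := p.1.1) (b := q.1.1)]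
  tauto

theorem bel_sym2 (β : B) (p q r : D.Pt) : D.Bel β p q r ↔ D.Bel β p r q := by
  unfold Bel
  rw [D.two_comm q.1.1 r.1.1, ne_comm (a := q.1.1) (b := r.1.1)]
  tauto

theorem F_sym1 [Nonempty B] (p q r : D.Pt) : D.F p q r = D.F q p r := by
  unfold F col
  rw [show (fun β => D.Bel β p q r) = fun β => D.Bel β q p r from
    funext fun β => propext (D.bel_sym1 β p q r), lc_sym1]

theorem F_sym2 [Nonempty B] (p q r : D.Pt) : D.F p q r = D.F p r q := by
  unfold F col
  rw [show (fun β => D.Bel β p q r) = fun β => D.Bel β p r q from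
    funext fun β => propext (D.bel_sym2 β p q r), lc_sym2]

theorem pos_lt (β : B) (a : V) (h : D.Mem β a) : D.pos β a < 4 := by
  unfold pos; rw [dif_pos h]; exact h.choose_spec.1

theorem e_pos (β : B) (a : V) (h : D.Mem β a) : D.e β (D.pos β a) = a := by
  unfold pos; rw [dif_pos h]; exact h.choose_spec.2

theorem mem_e (β : B) (n : ℕ) (h : n < 4) : D.Mem β (D.e β n) := ⟨n, h, rfl⟩

theorem pos_e (β : B) (n : ℕ) (h : n < 4) : D.pos β (D.e β n) = n :=
  D.hinj β _ _ (D.pos_lt β _ (D.mem_e β n h)) h (D.e_pos β _ (D.mem_e β n h))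

theorem pos_inj (β : B) (a b : V) (ha : D.Mem β a) (hb : D.Mem β b) :
    D.pos β a = D.pos β b ↔ a = b := by
  refine ⟨fun h => ?_, fun h => by rw [h]⟩
  rw [← D.e_pos β a ha, h, D.e_pos β b hb]

theorem w_iff (β : B) : D.w β = true ↔ D.Mem β D.om := by simp [w]

theorem f_iff (β : B) : D.f β = true ↔ D.Mem β D.inf := by simp [f]

theorem pos_inf (β : B) (h : D.Mem β D.inf) : D.pos β D.inf = 3 := by
  have := D.hinf β h
  rw [← this, D.pos_e β 3 (by norm_num)]

theorem pos_om (β : B) (h : D.Mem β D.om) : D.pos β D.om = 2 := by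
  have := D.hom β h
  rw [← this, D.pos_e β 2 (by norm_num)]

theorem pos_three (β : B) (a : V) (ha : D.Mem β a) (hf : D.f β = true) :
    D.pos β a = 3 ↔ a = D.inf := by
  rw [D.f_iff] at hf
  rw [← D.pos_inf β hf, D.pos_inj β _ _ ha hf]

theorem pos_two (β : B) (a : V) (ha : D.Mem β a) (hf : D.w β = true) :
    D.pos β a = 2 ↔ a = D.om := by
  rw [D.w_iff] at hf
  rw [← D.pos_om β hf, D.pos_inj β _ _ ha hf]

theorem code_div (β : B) (p : D.Pt) : D.code β p / 3 = D.pos β p.1.1 := by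
  unfold code; have := p.1.2.2; omega

theorem code_mod (β : B) (p : D.Pt) : D.code β p % 3 = p.1.2.1 := by
  unfold code; have := p.1.2.2; omega

theorem code_lt (β : B) (p : D.Pt) (h : D.Mem β p.1.1) : D.code β p < 12 := by
  unfold code; have := p.1.2.2; have := D.pos_lt β _ h; omega

theorem code_vp (β : B) (p : D.Pt) (h : D.Mem β p.1.1) : vp (D.w β) (D.f β) (D.code β p) = true := by
  unfold vp
  rw [code_div, code_mod]
  simp only [Bool.and_eq_true, Bool.or_eq_true, Bool.not_eq_true', ← Bool.not_eq_true, Nat.beq_eq]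
  constructor
  · by_cases hf : D.f β = true
    · rw [D.pos_three β _ h hf]
      by_cases hp : p.1.1 = D.inf
      · right; rw [p.2.1 hp]; rfl
      · left; tauto
    · left; tauto
  · by_cases hf : D.w β = true
    · rw [D.pos_two β _ h hf]
      by_cases hp : p.1.1 = D.om
      · right; intro h0; exact p.2.2 hp (Fin.ext h0)
      · left; tauto
    · left; tauto

theorem code_inj (β : B) (p q : D.Pt) (hp : D.Mem β p.1.1) (hq : D.Mem β q.1.1)
    (h : D.code β p = D.code β q) : p = q := by
  have h1 : D.pos β p.1.1 = D.pos β q.1.1 := by rw [← code_div, ← code_div, h]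
  have h2 : p.1.2.1 = q.1.2.1 := by rw [← D.code_mod β p, ← D.code_mod β q, h]
  exact Subtype.ext (Prod.ext ((D.pos_inj β _ _ hp hq).1 h1) (Fin.ext h2))

theorem exists_pt (β : B) (c : ℕ) (hc : c < 12) (hv : vp (D.w β) (D.f β) c = true) :
    ∃ p : D.Pt, D.Mem β p.1.1 ∧ D.code β p = c := by
  unfold vp at hv
  simp only [Bool.and_eq_true, Bool.or_eq_true, Bool.not_eq_true', ← Bool.not_eq_true,
    Nat.beq_eq] at hv
  have hlt : c / 3 < 4 := by omega
  have hm := D.mem_e β _ hlt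
  have hpe := D.pos_e β _ hlt
  refine ⟨⟨(D.e β (c / 3), ⟨c % 3, Nat.mod_lt _ (by norm_num)⟩), ?_, ?_⟩, hm, ?_⟩
  · intro h
    have hf : D.f β = true := by rw [D.f_iff, ← h]; exact hm
    have h3 := (D.pos_three β _ hm hf).2 h
    apply Fin.ext
    rcases hv.1 with h' | h'
    · exact absurd ⟨hf, by omega⟩ h'
    · exact h'
  · intro h h0
    have hf : D.w β = true := by rw [D.w_iff, ← h]; exact hm
    have h3 := (D.pos_two β _ hm hf).2 h
    have h0 := congrArg Fin.val h0
    rcases hv.2 with h' | h'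
    · exact absurd ⟨hf, by omega⟩ h'
    · exact h' h0
  · unfold code
    simp only [hpe]; omega

theorem bel_of (β : B) (p q r : D.Pt) (hp : D.Mem β p.1.1) (hq : D.Mem β q.1.1)
    (hr : D.Mem β r.1.1)
    (h : bel (D.w β) (D.f β) (D.code β p / 3) (D.code β q / 3) (D.code β r / 3) = true) :
    D.Bel β p q r := by
  refine ⟨hp, hq, hr, ?_⟩
  rw [code_div, code_div, code_div] at h
  unfold bel two at h
  simp only [Bool.and_eq_true, Bool.or_eq_true, Bool.not_eq_true', ← Bool.not_eq_true, Nat.beq_eq,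
    D.pos_inj β _ _ hp hq, D.pos_inj β _ _ hp hr, D.pos_inj β _ _ hq hr] at h
  rcases h with h | ⟨hf, h⟩
  · left; tauto
  · right
    refine ⟨(D.f_iff β).1 hf, ?_⟩
    rw [D.pos_three β _ hp hf, D.pos_three β _ hq hf, D.pos_three β _ hr hf, D.w_iff] at h
    unfold Two
    tauto

theorem col_eq (β γ : B) (p q r : D.Pt) (hpq : p ≠ q) (hpr : p ≠ r) (hqr : q ≠ r)
    (h : D.Bel β p q r) (h' : D.Bel γ p q r) : D.col β p q r = D.col γ p q r := by
  obtain ⟨hp, hq, hr, h⟩ := h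
  obtain ⟨hp', hq', hr', h'⟩ := h'
  by_cases hd : p.1.1 ≠ q.1.1 ∧ p.1.1 ≠ r.1.1 ∧ q.1.1 ≠ r.1.1
  · rw [D.huniq _ _ _ hd.1 hd.2.1 hd.2.2 β γ hp hq hr hp' hq' hr']
  obtain ⟨hf, h⟩ := h.resolve_left hd
  obtain ⟨hf', h'⟩ := h'.resolve_left hd
  have key : ∀ a b, D.Two a b → D.Mem β a → D.Mem β b → D.Mem γ a → D.Mem γ b → β = γ :=
    fun a b ht h1 h2 h3 h4 => D.huniq a b D.inf ht.1 ht.2.1 ht.2.2 β γ h1 h2 hf h3 h4 hf'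
  by_cases t1 : D.Two p.1.1 q.1.1
  · rw [key _ _ t1 hp hq hp' hq']
  by_cases t2 : D.Two p.1.1 r.1.1
  · rw [key _ _ t2 hp hr hp' hr']
  by_cases t3 : D.Two q.1.1 r.1.1
  · rw [key _ _ t3 hq hr hq' hr']
  have hw : D.Mem β D.om := ((h.resolve_left t1).resolve_left t2).resolve_left t3
  have hw' : D.Mem γ D.om := ((h'.resolve_left t1).resolve_left t2).resolve_left t3
  have key2 : ∀ a, D.Mem β a → D.Mem γ a → β ≠ γ → a = D.inf ∨ a = D.om := by
    intro a h1 h2 hne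
    by_contra hc
    push Not at hc
    exact hne (key a D.om ⟨hc.2, hc.1, D.hio.symm⟩ h1 hw h2 hw')
  by_cases hbg : β = γ
  · rw [hbg]
  have key3 : ∀ p : D.Pt, p.1.1 = D.inf ∨ p.1.1 = D.om →
      D.code β p ∈ [7, 8, 9] ∧ D.code γ p = D.code β p := by
    rintro p (hp | hp)
    · unfold code
      rw [hp, D.pos_inf β hf, D.pos_inf γ hf', p.2.1 hp]
      simp
    · have := p.2.2 hp
      unfold code
      rw [hp, D.pos_om β hw, D.pos_om γ hw']
      have h1 := p.1.2.2
      have h2 : p.1.2.1 ≠ 0 := fun h => this (Fin.ext h)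
      simp; omega
  have ep := key3 p (key2 _ hp hp' hbg)
  have eq := key3 q (key2 _ hq hq' hbg)
  have er := key3 r (key2 _ hr hr' hbg)
  unfold col
  rw [(D.w_iff β).2 hw, (D.w_iff γ).2 hw', (D.f_iff β).2 hf, (D.f_iff γ).2 hf', ep.2, eq.2, er.2,
    lc_special _ ep.1 _ eq.1 _ er.1 (fun h => hpq (D.code_inj β _ _ hp hq h))
      (fun h => hpr (D.code_inj β _ _ hp hr h)) (fun h => hqr (D.code_inj β _ _ hq hr h))]
  unfold tr
  simp [D.hinf β hf, D.hinf γ hf', sys]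

theorem F_eq [Nonempty B] (β : B) (p q r : D.Pt) (hpq : p ≠ q) (hpr : p ≠ r) (hqr : q ≠ r)
    (h : D.Bel β p q r) : D.F p q r = D.col β p q r :=
  D.col_eq _ _ p q r hpq hpr hqr
    (Classical.epsilon_spec (p := fun β => D.Bel β p q r) ⟨β, h⟩) h

theorem vs_ok (β : B) (x : V) (i : Fin 3) (hx : D.Mem β x) (h1 : x ≠ D.om) (h2 : x = D.inf → i = 0) :
    vs (D.w β) (D.f β) (D.pos β x) i.1 = true := by
  unfold vs
  simp only [Bool.and_eq_true, Bool.or_eq_true, Bool.not_eq_true', ← Bool.not_eq_true, Nat.beq_eq]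
  constructor
  · rintro ⟨hw, h⟩
    exact h1 ((D.pos_two β _ hx hw).1 h)
  · by_cases hf : D.f β = true
    · rw [D.pos_three β _ hx hf]
      by_cases hp : x = D.inf
      · right; rw [h2 hp]; rfl
      · left; tauto
    · left; tauto

theorem stepB [Nonempty B] (β : B) (x : V) (i : Fin 3) (p q : D.Pt) (hx : D.Mem β x)
    (hp : D.Mem β p.1.1) (hq : D.Mem β q.1.1)
    (h1 : x ≠ D.om) (h2 : x = D.inf → i = 0) (hpq : p ≠ q)
    (hc : (D.Mem β D.om ∧ D.Mem β D.inf) ∨ (p.1.1 ≠ q.1.1 ∧ p.1.1 ≠ x ∧ q.1.1 ≠ x) ∨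
      (D.Mem β D.inf ∧ x ≠ D.inf ∧ p.1.1 = q.1.1 ∧ p.1.1 ≠ x ∧ p.1.1 ≠ D.inf) ∨
      (q.1.1 = x ∧ p.1.1 ≠ x ∧ p.1.1 ≠ D.inf ∧ p.1.1 ≠ D.om ∧ x ≠ D.inf ∧
        ((D.Mem β D.inf ∧ q.1.2 ≠ i) ∨ (D.Mem β D.om ∧ q.1.2 = i)))) :
    ∃ r, r ≠ p ∧ r ≠ q ∧ (D.F p q r).1 = D.sys x i := by
  have hcond : condB (D.w β) (D.f β) (D.code β p) (D.code β q) (D.pos β x) i.1 = true := by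
    unfold condB
    simp only [code_div, code_mod, Bool.and_eq_true, Bool.or_eq_true, Bool.not_eq_true',
      ← Bool.not_eq_true, Nat.beq_eq, D.pos_inj β _ _ hp hq, D.pos_inj β _ _ hp hx,
      D.pos_inj β _ _ hq hx]
    have a1 := D.w_iff β
    have a2 := D.f_iff β
    have a3 := D.pos_three β _ hx
    have a4 := D.pos_three β _ hp
    have a5 := D.pos_two β _ hp
    have a6 : q.1.2.1 = i.1 ↔ q.1.2 = i := Fin.ext_iff.symm
    rw [a6]
    rcases hc with hc | hc | hc | hc
    · left; left; left; exact ⟨a1.2 hc.1, a2.2 hc.2⟩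
    · left; left; right; exact ⟨⟨hc.1, hc.2.1⟩, hc.2.2⟩
    · obtain ⟨b1, b2, b3, b4, b5⟩ := hc
      have b1 := a2.2 b1
      left; right; exact ⟨⟨⟨⟨b1, fun h => b2 ((a3 b1).1 h)⟩, b3⟩, b4⟩, fun h => b5 ((a4 b1).1 h)⟩
    · obtain ⟨b1, b2, b3, b4, b5, b6⟩ := hc
      right
      refine ⟨⟨⟨⟨⟨b1, b2⟩, fun h => b3 ((a4 h.2).1 h.1)⟩, fun h => b4 ((a5 h.2).1 h.1)⟩,
        fun h => b5 ((a3 h.2).1 h.1)⟩, ?_⟩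
      exact b6.imp (fun h => ⟨a2.2 h.1, h.2⟩) (fun h => ⟨a1.2 h.1, h.2⟩)
  obtain ⟨c, c1, c2, c3, c4, c5, c6⟩ := localB _ _ _ _ _ _ (D.code_lt β p hp) (D.code_lt β q hq)
    (D.pos_lt β x hx) i.2 (D.vs_ok β x i hx h1 h2) (D.code_vp β p hp) (D.code_vp β q hq)
    (fun h => hpq (D.code_inj β _ _ hp hq h)) hcond
  obtain ⟨r, hr, rfl⟩ := D.exists_pt β c c1 c2
  have n1 : r ≠ p := by rintro rfl; exact c3 rfl
  have n2 : r ≠ q := by rintro rfl; exact c4 rfl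
  refine ⟨r, n1, n2, ?_⟩
  rw [D.F_eq β p q r hpq n1.symm n2.symm (D.bel_of β p q r hp hq hr c5)]
  unfold col tr
  generalize lc (D.w β) (D.f β) (D.code β p) (D.code β q) (D.code β r) = N at *
  have hi := i.2
  have e1 : N / 16 = D.pos β x := by omega
  have e2 : N / 4 % 4 = i.1 := by omega
  simp only [e1, e2, D.e_pos β x hx]
  congr 1
  apply Fin.ext
  simp only [Fin.ofNat]; omega

theorem stepR [Nonempty B] (β : B) (x : V) (i : Fin 3) (t : ℕ) (p : D.Pt) (hx : D.Mem β x)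
    (hp : D.Mem β p.1.1) (ht : t < 4)
    (h1 : x ≠ D.om) (h2 : x = D.inf → i = 0)
    (hc : (D.Mem β D.om ∧ D.Mem β D.inf) ∨
      (t ≠ 0 ∧ ((p.1.1 ≠ x ∧ p.1.1 ≠ D.om ∧ p.1.1 ≠ D.inf) ∨
        (D.Mem β D.inf ∧ x ≠ D.inf ∧ (p.1.1 = D.inf ∨ (p.1.1 = x ∧ p.1.2 ≠ i))) ∨
        (D.Mem β D.om ∧ (p.1.1 = D.om ∨ (p.1.1 = x ∧ p.1.2 = i))))) ∨
      (t = 0 ∧ D.Mem β D.inf ∧ x ≠ D.inf ∧ p.1.1 ≠ x ∧ p.1.1 ≠ D.inf)) :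
    ∃ q r, q ≠ p ∧ r ≠ p ∧ r ≠ q ∧ D.F p q r =
      (D.sys x i, if t = 0 then none else some (D.rho x β, Fin.ofNat 3 (t - 1))) := by
  have hcond : condR (D.w β) (D.f β) (D.code β p) (D.pos β x) i.1 t = true := by
    unfold condR
    simp only [code_div, code_mod, Bool.and_eq_true, Bool.or_eq_true, Bool.not_eq_true',
      ← Bool.not_eq_true, Nat.beq_eq, D.pos_inj β _ _ hp hx]
    have a1 := D.w_iff β
    have a2 := D.f_iff β
    have a3 := D.pos_three β _ hx
    have a4 := D.pos_three β _ hp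
    have a5 := D.pos_two β _ hp
    have a6 : p.1.2.1 = i.1 ↔ p.1.2 = i := Fin.ext_iff.symm
    rw [a6]
    rcases hc with hc | ⟨ht, hc | hc | hc⟩ | hc
    · left; left; exact ⟨a1.2 hc.1, a2.2 hc.2⟩
    · left; right; refine ⟨ht, ?_⟩; left; left
      exact ⟨⟨hc.1, fun h => hc.2.1 ((a5 h.1).1 h.2)⟩, fun h => hc.2.2 ((a4 h.1).1 h.2)⟩
    · left; right; refine ⟨ht, ?_⟩; left; right
      obtain ⟨b1, b2, b3⟩ := hc
      have b1 := a2.2 b1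
      exact ⟨⟨b1, fun h => b2 ((a3 b1).1 h)⟩, b3.imp (fun h => (a4 b1).2 h) id⟩
    · left; right; refine ⟨ht, ?_⟩; right
      obtain ⟨b1, b3⟩ := hc
      have b1 := a1.2 b1
      exact ⟨b1, b3.imp (fun h => (a5 b1).2 h) id⟩
    · right
      obtain ⟨b0, b1, b2, b3, b4⟩ := hc
      have b1 := a2.2 b1
      exact ⟨⟨⟨⟨b0, b1⟩, fun h => b2 ((a3 b1).1 h)⟩, b3⟩, fun h => b4 ((a4 b1).1 h)⟩
  obtain ⟨c, c1, d, d1, c2, d2, c3, d3, n3, c5, c6⟩ := localR _ _ _ _ _ _ (D.code_lt β p hp)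
    (D.pos_lt β x hx) i.2 ht (D.vs_ok β x i hx h1 h2) (D.code_vp β p hp) hcond
  obtain ⟨q, hq, rfl⟩ := D.exists_pt β c c1 c2
  obtain ⟨r, hr, rfl⟩ := D.exists_pt β d d1 d2
  have n0 : q ≠ p := by rintro rfl; exact c3 rfl
  have n1 : r ≠ p := by rintro rfl; exact d3 rfl
  have n2 : r ≠ q := by rintro rfl; exact n3 rfl
  refine ⟨q, r, n0, n1, n2, ?_⟩
  rw [D.F_eq β p q r n0.symm n1.symm n2.symm (D.bel_of β p q r hp hq hr c5)]
  unfold col tr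
  rw [c6]
  have hi := i.2
  have e1 : (16 * D.pos β x + 4 * i.1 + t) / 16 = D.pos β x := by omega
  have e2 : (16 * D.pos β x + 4 * i.1 + t) / 4 % 4 = i.1 := by omega
  have e3 : (16 * D.pos β x + 4 * i.1 + t) % 4 = t := by omega
  have e4 : Fin.ofNat 3 i.1 = i := by
    apply Fin.ext
    simp only [Fin.ofNat]; omega
  simp only [e1, e2, e3, e4, D.e_pos β x hx]


theorem wfblk (z : V) : ∃ β, D.Mem β z ∧ D.Mem β D.inf ∧ D.Mem β D.om := by
  by_cases h1 : z = D.inf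
  · obtain ⟨β, _, b, c⟩ := D.hblk D.z0 D.inf D.om D.hz1 D.hz2 D.hio
    exact ⟨β, h1 ▸ b, b, c⟩
  by_cases h2 : z = D.om
  · obtain ⟨β, _, b, c⟩ := D.hblk D.z0 D.inf D.om D.hz1 D.hz2 D.hio
    exact ⟨β, h2 ▸ c, b, c⟩
  exact D.hblk z D.inf D.om h1 h2 D.hio

theorem sys_repr (s : D.Sy) : ∃ x i, x ≠ D.om ∧ (x = D.inf → i = 0) ∧ s = D.sys x i := by
  rcases s with _ | ⟨⟨y, hy⟩, i⟩
  · exact ⟨D.inf, 0, D.hio, fun _ => rfl, by simp [sys]⟩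
  · exact ⟨y, i, hy.2, fun h => absurd h hy.1, by simp [sys, hy]⟩

theorem HB0 [Nonempty B] (x : V) (i : Fin 3) (h1 : x ≠ D.om) (h2 : x = D.inf → i = 0)
    (p q : D.Pt) (hq : q.1.1 = x) (hp : p.1.1 ≠ x) :
    ∃ r, r ≠ p ∧ r ≠ q ∧ (D.F p q r).1 = D.sys x i := by
  have hpq : p ≠ q := by rintro rfl; exact hp hq
  by_cases a1 : p.1.1 = D.inf
  · obtain ⟨β, b1, b2, b3⟩ := D.wfblk x
    exact D.stepB β x i p q b1 (by rw [a1]; exact b2) (by rw [hq]; exact b1) h1 h2 hpq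
      (Or.inl ⟨b3, b2⟩)
  by_cases a2 : p.1.1 = D.om
  · obtain ⟨β, b1, b2, b3⟩ := D.wfblk x
    exact D.stepB β x i p q b1 (by rw [a2]; exact b3) (by rw [hq]; exact b1) h1 h2 hpq
      (Or.inl ⟨b3, b2⟩)
  by_cases a3 : x = D.inf
  · obtain ⟨β, b1, b2, b3⟩ := D.wfblk p.1.1
    exact D.stepB β x i p q (by rw [a3]; exact b2) b1 (by rw [hq, a3]; exact b2) h1 h2 hpq
      (Or.inl ⟨b3, b2⟩)
  by_cases a4 : q.1.2 = i
  · obtain ⟨β, b1, b2, b3⟩ := D.hblk x p.1.1 D.om hp.symm h1 a2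
    exact D.stepB β x i p q b1 b2 (by rw [hq]; exact b1) h1 h2 hpq
      (Or.inr (Or.inr (Or.inr ⟨hq, hp, a1, a2, a3, Or.inr ⟨b3, a4⟩⟩)))
  · obtain ⟨β, b1, b2, b3⟩ := D.hblk x p.1.1 D.inf hp.symm a3 a1
    exact D.stepB β x i p q b1 b2 (by rw [hq]; exact b1) h1 h2 hpq
      (Or.inr (Or.inr (Or.inr ⟨hq, hp, a1, a2, a3, Or.inl ⟨b3, a4⟩⟩)))

theorem HB [Nonempty B] (s : D.Sy) (p q : D.Pt) (hpq : p ≠ q) :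
    ∃ r, r ≠ p ∧ r ≠ q ∧ (D.F p q r).1 = s := by
  obtain ⟨x, i, h1, h2, rfl⟩ := D.sys_repr s
  by_cases hab : p.1.1 = q.1.1
  · by_cases a0 : p.1.1 = x
    · obtain ⟨β, b1, b2, b3⟩ := D.wfblk x
      exact D.stepB β x i p q b1 (by rw [a0]; exact b1) (by rw [← hab, a0]; exact b1) h1 h2 hpq
        (Or.inl ⟨b3, b2⟩)
    by_cases a1 : p.1.1 = D.inf
    · obtain ⟨β, b1, b2, b3⟩ := D.wfblk x
      exact D.stepB β x i p q b1 (by rw [a1]; exact b2) (by rw [← hab, a1]; exact b2) h1 h2 hpq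
        (Or.inl ⟨b3, b2⟩)
    by_cases a3 : x = D.inf
    · obtain ⟨β, b1, b2, b3⟩ := D.wfblk p.1.1
      exact D.stepB β x i p q (by rw [a3]; exact b2) b1 (by rw [← hab]; exact b1) h1 h2 hpq
        (Or.inl ⟨b3, b2⟩)
    obtain ⟨β, b1, b2, b3⟩ := D.hblk x p.1.1 D.inf (Ne.symm a0) a3 a1
    exact D.stepB β x i p q b1 b2 (by rw [← hab]; exact b2) h1 h2 hpq
      (Or.inr (Or.inr (Or.inl ⟨b3, a3, hab, a0, a1⟩)))
  by_cases hq : q.1.1 = x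
  · exact D.HB0 x i h1 h2 p q hq (fun h => hab (h.trans hq.symm))
  by_cases hp : p.1.1 = x
  · obtain ⟨r, c1, c2, c3⟩ := D.HB0 x i h1 h2 q p hp hq
    exact ⟨r, c2, c1, by rw [D.F_sym1, c3]⟩
  obtain ⟨β, b1, b2, b3⟩ := D.hblk x p.1.1 q.1.1 (Ne.symm hp) (Ne.symm hq) hab
  exact D.stepB β x i p q b1 b2 b3 h1 h2 hpq (Or.inr (Or.inl ⟨hab, hp, hq⟩))

theorem HR [Nonempty B] (s : D.Sy) (l : D.La) (p : D.Pt) :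
    ∃ q r, q ≠ p ∧ r ≠ p ∧ r ≠ q ∧ D.F p q r = (s, l) := by
  obtain ⟨x, i, h1, h2, rfl⟩ := D.sys_repr s
  rcases l with _ | ⟨rr, t⟩
  · have key : ∃ β, D.Mem β x ∧ D.Mem β p.1.1 ∧ ((D.Mem β D.om ∧ D.Mem β D.inf) ∨
        (D.Mem β D.inf ∧ x ≠ D.inf ∧ p.1.1 ≠ x ∧ p.1.1 ≠ D.inf)) := by
      by_cases a0 : p.1.1 = x
      · obtain ⟨β, b1, b2, b3⟩ := D.wfblk x
        exact ⟨β, b1, by rw [a0]; exact b1, Or.inl ⟨b3, b2⟩⟩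
      by_cases a1 : p.1.1 = D.inf
      · obtain ⟨β, b1, b2, b3⟩ := D.wfblk x
        exact ⟨β, b1, by rw [a1]; exact b2, Or.inl ⟨b3, b2⟩⟩
      by_cases a3 : x = D.inf
      · obtain ⟨β, b1, b2, b3⟩ := D.wfblk p.1.1
        exact ⟨β, by rw [a3]; exact b2, b1, Or.inl ⟨b3, b2⟩⟩
      obtain ⟨β, b1, b2, b3⟩ := D.hblk x p.1.1 D.inf (Ne.symm a0) a3 a1
      exact ⟨β, b1, b2, Or.inr ⟨b3, a3, a0, a1⟩⟩
    obtain ⟨β, b1, b2, b3⟩ := key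
    obtain ⟨q, r, c1, c2, c3, c4⟩ := D.stepR β x i 0 p b1 b2 (by norm_num) h1 h2
      (b3.imp id (fun h => Or.inr ⟨rfl, h⟩))
    exact ⟨q, r, c1, c2, c3, by rw [c4]; simp⟩
  · have key : ∃ β, D.Mem β x ∧ D.Mem β p.1.1 ∧ D.rho x β = rr ∧
        ((D.Mem β D.om ∧ D.Mem β D.inf) ∨ ((p.1.1 ≠ x ∧ p.1.1 ≠ D.om ∧ p.1.1 ≠ D.inf) ∨
        (D.Mem β D.inf ∧ x ≠ D.inf ∧ (p.1.1 = D.inf ∨ (p.1.1 = x ∧ p.1.2 ≠ i))) ∨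
        (D.Mem β D.om ∧ (p.1.1 = D.om ∨ (p.1.1 = x ∧ p.1.2 = i))))) := by
      by_cases a2 : p.1.1 = D.om
      · obtain ⟨β, b1, b2, b3⟩ := D.hrho x D.om h1 rr
        exact ⟨β, b1, by rw [a2]; exact b2, b3, Or.inr (Or.inr (Or.inr ⟨b2, Or.inl a2⟩))⟩
      by_cases a0 : p.1.1 = x
      · by_cases a3 : x = D.inf
        · obtain ⟨β, b1, b2, b3⟩ := D.hrho x D.om h1 rr
          exact ⟨β, b1, by rw [a0]; exact b1, b3, Or.inl ⟨b2, by rw [← a3]; exact b1⟩⟩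
        by_cases a4 : p.1.2 = i
        · obtain ⟨β, b1, b2, b3⟩ := D.hrho x D.om h1 rr
          exact ⟨β, b1, by rw [a0]; exact b1, b3,
            Or.inr (Or.inr (Or.inr ⟨b2, Or.inr ⟨a0, a4⟩⟩))⟩
        · obtain ⟨β, b1, b2, b3⟩ := D.hrho x D.inf a3 rr
          exact ⟨β, b1, by rw [a0]; exact b1, b3,
            Or.inr (Or.inr (Or.inl ⟨b2, a3, Or.inr ⟨a0, a4⟩⟩))⟩
      obtain ⟨β, b1, b2, b3⟩ := D.hrho x p.1.1 (Ne.symm a0) rr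
      by_cases a1 : p.1.1 = D.inf
      · exact ⟨β, b1, b2, b3, Or.inr (Or.inr (Or.inl ⟨by rw [← a1]; exact b2,
          fun h => a0 (a1.trans h.symm), Or.inl a1⟩))⟩
      · exact ⟨β, b1, b2, b3, Or.inr (Or.inl ⟨a0, a2, a1⟩)⟩
    obtain ⟨β, b1, b2, rfl, b3⟩ := key
    have ht := t.2
    obtain ⟨q, r, c1, c2, c3, c4⟩ := D.stepR β x i (t.1 + 1) p b1 b2 (by omega) h1 h2
      (b3.imp id (fun h => Or.inl ⟨by omega, h⟩))
    refine ⟨q, r, c1, c2, c3, ?_⟩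
    rw [c4]
    have : Fin.ofNat 3 (t.1 + 1 - 1) = t := by
      apply Fin.ext
      simp only [Fin.ofNat]; omega
    simp [this]

theorem main {V B : Type} {k : ℕ} (D : Dat V B k) [Fintype V] (hV : Fintype.card V = 2 * k + 2) : ExistsLKTS (3 * (2 * k + 1)) := by
  classical
  have : Nonempty B := ⟨(D.wfblk D.inf).choose⟩
  have hZ : Fintype.card {y : V // y ≠ D.inf ∧ y ≠ D.om} = 2 * k := by
    rw [Fintype.card_subtype]
    have : (univ.filter fun y => y ≠ D.inf ∧ y ≠ D.om) = univ \ {D.inf, D.om} := by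
      ext; simp
    rw [this, card_sdiff_of_subset (by simp), card_pair D.hio, card_univ, hV]; rfl
  have hPt : Fintype.card D.Pt = 3 * (2 * k + 1) := by
    rw [Fintype.card_subtype]
    have : (univ.filter fun p : V × Fin 3 => (p.1 = D.inf → p.2 = 0) ∧ (p.1 = D.om → p.2 ≠ 0)) =
        univ \ {(D.inf, 1), (D.inf, 2), (D.om, 0)} := by
      ext ⟨a, j⟩
      have := D.hio
      by_cases h1 : a = D.inf
      · subst h1
        fin_cases j <;> simp [this]
      · fin_cases j <;> simp [h1]
    rw [this, card_sdiff_of_subset (by simp), card_univ, Fintype.card_prod, hV]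
    have : ({(D.inf, 1), (D.inf, 2), (D.om, 0)} : Finset (V × Fin 3)).card = 3 := by
      apply card_eq_three.2
      exact ⟨_, _, _, by simp, by simp, by simp, rfl⟩
    rw [this]; simp; omega
  refine exists_lkts_of_col (α := D.Pt) (S := D.Sy) (L := D.La) _ (3 * k + 1) hPt ?_ ?_ (by ring)
    D.F D.F_sym1 D.F_sym2 D.HB D.HR
  · rw [Fintype.card_option, Fintype.card_prod, hZ, Fintype.card_fin]; omega
  · rw [Fintype.card_option, Fintype.card_prod, Fintype.card_fin, Fintype.card_fin]; omega

end Dat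

theorem enum (b : Finset ℕ) (hb : b.card = 4) (c d : ℕ) (hcd : c ≠ d) :
    ∃ e : ℕ → ℕ, (∀ n, e n ∈ b) ∧ (∀ m n, m < 4 → n < 4 → e m = e n → m = n) ∧
      (∀ a ∈ b, ∃ n < 4, e n = a) ∧ (c ∈ b → e 3 = c) ∧ (d ∈ b → e 2 = d) := by
  have s1 : ∃ z ∈ b, (c ∈ b → z = c) ∧ z ≠ d := by
    by_cases h : c ∈ b
    · exact ⟨c, h, fun _ => rfl, hcd⟩
    · have : (b.erase d).Nonempty := by
        rw [← card_pos]
        have := pred_card_le_card_erase (s := b) (a := d)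
        omega
      obtain ⟨z, hz⟩ := this
      exact ⟨z, (mem_erase.1 hz).2, fun h' => absurd h' h, (mem_erase.1 hz).1⟩
  obtain ⟨z, hz, hzc, hzd⟩ := s1
  have c3 : (b.erase z).card = 3 := by rw [card_erase_of_mem hz, hb]
  have s2 : ∃ y ∈ b.erase z, (d ∈ b → y = d) := by
    by_cases h : d ∈ b
    · exact ⟨d, mem_erase.2 ⟨hzd.symm, h⟩, fun _ => rfl⟩
    · obtain ⟨y, hy⟩ : (b.erase z).Nonempty := by rw [← card_pos]; omega
      exact ⟨y, hy, fun h' => absurd h' h⟩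
  obtain ⟨y, hy, hyd⟩ := s2
  have c2 : ((b.erase z).erase y).card = 2 := by rw [card_erase_of_mem hy, c3]
  obtain ⟨u, x, hux, hs⟩ := card_eq_two.1 c2
  have hu : u ∈ (b.erase z).erase y := by rw [hs]; simp
  have hx : x ∈ (b.erase z).erase y := by rw [hs]; simp
  simp only [mem_erase] at hu hx hy
  refine ⟨fun n => if n = 0 then u else if n = 1 then x else if n = 2 then y else z,
    ?_, ?_, ?_, ?_, ?_⟩
  · intro n
    dsimp only
    split_ifs
    · exact hu.2.2
    · exact hx.2.2
    · exact hy.2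
    · exact hz
  · intro m n hm hn h
    obtain ⟨u1, u2, _⟩ := hu
    obtain ⟨x1, x2, _⟩ := hx
    obtain ⟨y1, _⟩ := hy
    interval_cases m <;> interval_cases n <;> simp_all
  · intro a ha
    by_cases h1 : a = z
    · exact ⟨3, by norm_num, by simp [h1]⟩
    by_cases h2 : a = y
    · exact ⟨2, by norm_num, by simp [h2]⟩
    have : a ∈ (b.erase z).erase y := by simp [h1, h2, ha]
    rw [hs] at this
    simp only [mem_insert, mem_singleton] at this
    rcases this with h | h
    · exact ⟨0, by norm_num, by simp [h]⟩
    · exact ⟨1, by norm_num, by simp [h]⟩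
  · intro h; simpa using hzc h
  · intro h; simpa using hyd h

theorem res {n : ℕ} {X : Finset ℕ} {B : Finset (Finset ℕ)} (h : IsRDS 3 4 n X B) (hn : 3 ≤ n)
    (x : ℕ) (hx : x ∈ X) : ∃ k, n = 2 * k + 2 ∧ ∃ ρ : Finset ℕ → Fin k,
      ∀ a ∈ X, x ≠ a → ∀ r, ∃ b ∈ B, x ∈ b ∧ a ∈ b ∧ ρ b = r := by
  classical
  obtain ⟨⟨hX, hB, hT⟩, hres⟩ := h
  obtain ⟨k, P, hP, hPB, hU⟩ := hres x hx
  have der : ∀ i, ∀ c ∈ P i, ∃ b ∈ B, x ∈ b ∧ c = b.erase x := by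
    intro i c hc
    have := hPB i hc
    unfold derivedBlocks at this
    simp only [mem_image, mem_filter] at this
    obtain ⟨b, ⟨h1, h2⟩, h3⟩ := this
    exact ⟨b, h1, h2, h3.symm⟩
  have hk : n = 2 * k + 2 := by
    obtain ⟨y, hy⟩ : (X.erase x).Nonempty := by
      rw [← card_pos, card_erase_of_mem hx]; omega
    have hyX := (mem_erase.1 hy).2
    have hyx := (mem_erase.1 hy).1
    have hb : ∀ i, ∃ b, (b ∈ P i ∧ y ∈ b) ∧ ∀ c, c ∈ P i → y ∈ c → c = b := by
      intro i
      obtain ⟨b, h1, h2⟩ := (hP i).2 y hy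
      exact ⟨b, h1, fun c a b => h2 c ⟨a, b⟩⟩
    choose b hb1 hb2 using hb
    have tri : ∀ z ∈ X, z ≠ x → z ≠ y → ∃! b, b ∈ B ∧ ({x, y, z} : Finset ℕ) ⊆ b := by
      intro z hz h1 h2
      apply hT
      · intro u hu
        simp only [mem_insert, mem_singleton] at hu
        rcases hu with rfl | rfl | rfl <;> assumption
      · exact card_eq_three.2 ⟨x, y, z, hyx.symm, h1.symm, h2.symm, rfl⟩
    have hun : univ.biUnion (fun i => (b i).erase y) = (X.erase x).erase y := by
      ext z
      simp only [mem_biUnion, mem_univ, true_and]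
      constructor
      · rintro ⟨i, hi⟩
        have := mem_erase.1 hi
        exact mem_erase.2 ⟨this.1, (hP i).1 _ (hb1 i).1 this.2⟩
      · intro hz
        simp only [mem_erase] at hz
        obtain ⟨c, ⟨hc, hs⟩, _⟩ := tri z hz.2.2 hz.2.1 hz.1
        have hcx : x ∈ c := hs (by simp)
        have hcy : y ∈ c := hs (by simp)
        have hcz : z ∈ c := hs (by simp)
        have : c.erase x ∈ derivedBlocks B x := by
          unfold derivedBlocks
          exact mem_image.2 ⟨c, mem_filter.2 ⟨hc, hcx⟩, rfl⟩
        obtain ⟨i, hi, _⟩ := hU _ this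
        refine ⟨i, ?_⟩
        rw [← hb2 i _ hi (mem_erase.2 ⟨hyx, hcy⟩)]
        simp [hz, hcz]
    have hdis : ∀ i ∈ (univ : Finset (Fin k)), ∀ j ∈ (univ : Finset (Fin k)), i ≠ j →
        Disjoint ((b i).erase y) ((b j).erase y) := by
      intro i _ j _ hij
      rw [disjoint_left]
      intro z hzi hzj
      apply hij
      obtain ⟨c, hc, hcx, hce⟩ := der i _ (hb1 i).1
      obtain ⟨d, hd, hdx, hde⟩ := der j _ (hb1 j).1
      have yi := (hb1 i).2
      have yj := (hb1 j).2
      have hzX := (hP i).1 _ (hb1 i).1 (mem_erase.1 hzi).2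
      rw [hce] at hzi yi
      rw [hde] at hzj yj
      simp only [mem_erase] at hzi hzj yi yj hzX
      have hcd : c = d := by
        apply (tri z hzX.2 hzX.1 hzi.1).unique
        · refine ⟨hc, ?_⟩
          intro u hu
          simp only [mem_insert, mem_singleton] at hu
          rcases hu with rfl | rfl | rfl
          · exact hcx
          · exact yi.2
          · exact hzi.2.2
        · refine ⟨hd, ?_⟩
          intro u hu
          simp only [mem_insert, mem_singleton] at hu
          rcases hu with rfl | rfl | rfl
          · exact hdx
          · exact yj.2
          · exact hzj.2.2
      have hbb : b i = b j := by rw [hce, hde, hcd]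
      exact (hU _ (hPB i (hb1 i).1)).unique (hb1 i).1 (by rw [hbb]; exact (hb1 j).1)
    have hcard := card_biUnion hdis
    rw [hun] at hcard
    have h2 : ∀ i ∈ (univ : Finset (Fin k)), ((b i).erase y).card = 2 := by
      intro i _
      obtain ⟨c, hc, hcx, hce⟩ := der i _ (hb1 i).1
      rw [card_erase_of_mem (hb1 i).2, hce, card_erase_of_mem hcx, (hB c hc).2]
    rw [sum_congr rfl h2, card_erase_of_mem hy, card_erase_of_mem hx, hX] at hcard
    simp at hcard
    omega
  refine ⟨k, hk, ?_⟩
  have : Nonempty (Fin k) := ⟨⟨0, by omega⟩⟩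
  refine ⟨fun b => Classical.epsilon fun i => b.erase x ∈ P i, ?_⟩
  intro a ha hxa r
  obtain ⟨c, ⟨hc, hac⟩, _⟩ := (hP r).2 a (mem_erase.2 ⟨hxa.symm, ha⟩)
  obtain ⟨b, hb, hxb, rfl⟩ := der r c hc
  refine ⟨b, hb, hxb, (mem_erase.1 hac).2, ?_⟩
  have := Classical.epsilon_spec (p := fun i => b.erase x ∈ P i) ⟨r, hc⟩
  exact (hU _ (hPB r hc)).unique this hc

theorem final (v : ℕ) (hv : 2 ≤ v) (h : ExistsRDSQS (v + 1)) : ExistsLKTS (3 * v) := by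
  classical
  obtain ⟨X, B, h⟩ := h
  have hX : X.card = v + 1 := h.1.1
  have hB := h.1.2.1
  have hT := h.1.2.2
  have hr := fun x hx => res h (by omega) x hx
  obtain ⟨inf, hi, om, ho, z0, hz, h1, h2, h3⟩ := two_lt_card.1 (show 2 < X.card by omega)
  obtain ⟨k, hk, _⟩ := hr inf hi
  have hr2 : ∀ x : X, ∃ ρ : Finset ℕ → Fin k,
      ∀ a ∈ X, x.1 ≠ a → ∀ r, ∃ b ∈ B, x.1 ∈ b ∧ a ∈ b ∧ ρ b = r := by
    intro x
    obtain ⟨k', hk', hh⟩ := hr x.1 x.2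
    have : k' = k := by omega
    subst this
    exact hh
  choose ρ hρ using hr2
  have he : ∀ b : B, ∃ e : ℕ → X, (∀ n, (e n).1 ∈ b.1) ∧
      (∀ m n, m < 4 → n < 4 → e m = e n → m = n) ∧
      (∀ a : X, a.1 ∈ b.1 → ∃ n < 4, e n = a) ∧ (inf ∈ b.1 → (e 3).1 = inf) ∧
      (om ∈ b.1 → (e 2).1 = om) := by
    intro b
    obtain ⟨e, e1, e2, e3, e4, e5⟩ := enum b.1 (hB _ b.2).2 inf om h1
    refine ⟨fun n => ⟨e n, (hB _ b.2).1 (e1 n)⟩, e1, ?_, ?_, e4, e5⟩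
    · intro m n hm hn hh
      exact e2 m n hm hn (congrArg Subtype.val hh)
    · intro a ha
      obtain ⟨n, hn, hh⟩ := e3 _ ha
      exact ⟨n, hn, Subtype.ext hh⟩
  choose e e1 e2 e3 e4 e5 using he
  have hm : ∀ (b : B) (a : X), (∃ n < 4, e b n = a) ↔ a.1 ∈ b.1 := by
    intro b a
    refine ⟨?_, e3 b a⟩
    rintro ⟨n, _, rfl⟩
    exact e1 b n
  have tri : ∀ a b c : X, a ≠ b → a ≠ c → b ≠ c →
      ∃! β, β ∈ B ∧ ({a.1, b.1, c.1} : Finset ℕ) ⊆ β := by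
    intro a b c hab hac hbc
    apply hT
    · intro u hu
      simp only [mem_insert, mem_singleton] at hu
      rcases hu with rfl | rfl | rfl
      · exact a.2
      · exact b.2
      · exact c.2
    · exact card_eq_three.2 ⟨_, _, _, fun h => hab (Subtype.ext h), fun h => hac (Subtype.ext h),
        fun h => hbc (Subtype.ext h), rfl⟩
  let D : Dat X B k :=
    { inf := ⟨inf, hi⟩
      om := ⟨om, ho⟩
      z0 := ⟨z0, hz⟩
      e := e
      rho := fun x b => ρ x b.1
      hio := fun h => h1 (congrArg Subtype.val h)
      hz1 := fun h => h2 (congrArg Subtype.val h).symm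
      hz2 := fun h => h3 (congrArg Subtype.val h).symm
      hinj := e2
      hblk := by
        intro a b c hab hac hbc
        obtain ⟨β, ⟨hβ, hs⟩, _⟩ := tri a b c hab hac hbc
        exact ⟨⟨β, hβ⟩, (hm _ _).2 (hs (by simp)), (hm _ _).2 (hs (by simp)),
          (hm _ _).2 (hs (by simp))⟩
      huniq := by
        intro a b c hab hac hbc β γ
        simp only [hm]
        intro x1 x2 x3 y1 y2 y3
        apply Subtype.ext
        apply (tri a b c hab hac hbc).unique
        · refine ⟨β.2, ?_⟩
          intro u hu
          simp only [mem_insert, mem_singleton] at hu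
          rcases hu with rfl | rfl | rfl <;> assumption
        · refine ⟨γ.2, ?_⟩
          intro u hu
          simp only [mem_insert, mem_singleton] at hu
          rcases hu with rfl | rfl | rfl <;> assumption
      hinf := by
        intro β hh
        exact Subtype.ext (e4 β ((hm _ _).1 hh))
      hom := by
        intro β hh
        exact Subtype.ext (e5 β ((hm _ _).1 hh))
      hrho := by
        intro x a hxa r
        obtain ⟨b, hb, c1, c2, c3⟩ := hρ x a.1 a.2 (fun h => hxa (Subtype.ext h)) r
        exact ⟨⟨b, hb⟩, (hm _ _).2 c1, (hm _ _).2 c2, c3⟩ }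
  have hv2 : v = 2 * k + 1 := by omega
  rw [hv2]
  exact D.main (by rw [Fintype.card_coe, hX, hk])

end LK

/-- If there exists an RDSQS(v + 1), then there exists an LKTS(3v). -/
theorem stmt_0 (v : ℕ) (hv : 0 < v) (h : ExistsRDSQS (v + 1)) :
    ExistsLKTS (3 * v) := by
  by_cases h1 : v = 1
  · subst h1
    exact LK.exists_lkts_three
  · exact LK.final v (by omega) h
end

section
/- There exists an RDGDD(3, 4, 24) of type 3^8, i.e., a group divisible design GDD(3, 4, 24) of type 3^8 whose derived design at every point is resolvable. -/
open Finset

def tab : List (List (List ℕ)) := [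
  [[4169, 132113, 4456481, 1050753, 2162945, 8397313, 573441],
   [8329, 33825, 8650769, 526401, 4325633, 2101761, 1130497],
   [16649, 131617, 2621457, 1049665, 4227201, 8394753, 335873],
   [16545, 133129, 5242897, 262721, 8421633, 2106369, 593921],
   [8465, 67617, 9437193, 524929, 2129985, 4199425, 409601],
   [4241, 33289, 3145761, 264449, 4259905, 8406017, 663553],
   [16465, 66569, 8912929, 1049345, 2228353, 4204545, 299009],
   [4385, 66065, 4718601, 263297, 8519745, 2115585, 1089537],
   [8289, 34833, 2359305, 525569, 8454273, 4211201, 1183745]],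
  [[8338, 34850, 8912906, 262914, 4325442, 2114562, 1118210],
   [16658, 67594, 2621474, 1049218, 8421442, 4203522, 397314],
   [4178, 33802, 5242914, 264322, 8454402, 2105858, 671746],
   [4362, 33298, 8650786, 525442, 2162754, 4212738, 1187842],
   [16482, 131594, 2359314, 1049858, 4259970, 8398850, 561154],
   [8482, 66578, 4456458, 524866, 8519810, 2103298, 1097730],
   [4258, 133138, 3145738, 263234, 4227330, 8405506, 598018],
   [8266, 132130, 9437202, 526594, 2130050, 4198914, 344066],
   [16522, 66082, 4718610, 1050690, 2228482, 8393730, 303106]],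
  [[16676, 66060, 3145748, 525380, 8421508, 4200452, 401412],
   [4196, 131604, 5242892, 263428, 2162820, 8407044, 565252],
   [8356, 67604, 8650764, 525060, 2228292, 4211716, 1085444],
   [8276, 66596, 2621452, 1050884, 4325508, 8393220, 311300],
   [4236, 33812, 4718628, 264260, 8519940, 2114052, 1122308],
   [16460, 133156, 8912916, 1049732, 2130180, 4203012, 331780],
   [8460, 33316, 4456468, 526468, 8454212, 2102276, 1196036],
   [16532, 34828, 2359332, 1049156, 4260100, 8397828, 659460],
   [4372, 132108, 9437220, 262788, 4227140, 2107396, 606212]],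
  [[33289, 16522, 2621452, 8389896, 272392, 1114184, 4329480],
   [66569, 4236, 3145738, 4195080, 542728, 294984, 8527880],
   [133129, 16460, 4456458, 8389256, 529416, 1081608, 2170888],
   [132108, 16649, 8912906, 2097736, 1054728, 327816, 4235272],
   [67594, 8460, 9437193, 4195400, 266760, 557192, 2244616],
   [33802, 4169, 8650764, 2099464, 533000, 1179784, 4276232],
   [131594, 8329, 5242892, 8390728, 279560, 590088, 2134024],
   [34828, 8266, 4718601, 2098312, 1065480, 393480, 8458248],
   [66060, 4362, 2359305, 4196488, 1057800, 655432, 8437768]],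
  [[66578, 4372, 5242897, 2099280, 541200, 393360, 8429584],
   [133138, 8465, 4456468, 8389712, 1053200, 589968, 2146320],
   [33298, 4241, 8912916, 2098448, 1058832, 327760, 4341776],
   [34833, 4178, 3145748, 4195472, 270864, 655632, 8470544],
   [131604, 16465, 2359314, 8390800, 533520, 1114384, 4231184],
   [67604, 8338, 2621457, 4194896, 1066000, 295184, 8523792],
   [33812, 16658, 8650769, 2097808, 530448, 1179728, 4268048],
   [66065, 16532, 9437202, 4196624, 267280, 557136, 2236432],
   [132113, 8276, 4718610, 8389392, 280592, 1081488, 2166800]],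
  [[133156, 8289, 8650786, 4194976, 1053728, 557344, 2179104],
   [33316, 16482, 8912929, 2099360, 271392, 1179936, 4263968],
   [66596, 8482, 3145761, 4196448, 279072, 655520, 8425504],
   [66082, 8356, 4456481, 8390944, 541728, 1081440, 2232352],
   [33825, 4258, 4718628, 2097952, 1067040, 393312, 8462368],
   [131617, 16676, 5242914, 8389792, 268320, 589920, 2138144],
   [67617, 4196, 2621474, 4195616, 1057312, 295072, 8536096],
   [132130, 4385, 2359332, 8389216, 534560, 1114272, 4243488],
   [34850, 16545, 9437220, 2098272, 528928, 327968, 4333600]],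
  [[262721, 8389712, 71744, 16482, 4227140, 655432, 3153984],
   [524866, 2099280, 136256, 8289, 8454212, 294984, 5259328],
   [1049156, 8390728, 42048, 16465, 2162754, 393312, 4722752],
   [1050690, 8389216, 83008, 4169, 2228292, 557136, 4464704],
   [525380, 4196448, 148032, 8266, 2129985, 327760, 9441344],
   [263234, 2097736, 51264, 4196, 4259905, 1179728, 8921152],
   [1049665, 4194896, 141376, 16460, 8421442, 589920, 2363456],
   [264260, 4195400, 74304, 4178, 8519745, 1081440, 2637888],
   [526401, 2098272, 37440, 8276, 4325442, 1114184, 8667200]],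
  [[525442, 2099360, 139904, 4236, 8454273, 1081488, 4472960],
   [1049732, 4194976, 43136, 16522, 2228353, 589968, 8654976],
   [263297, 2097808, 84096, 4258, 4325508, 557192, 9445504],
   [262788, 2098312, 137344, 8338, 4227201, 1114272, 8929408],
   [1050753, 8389256, 38016, 16532, 4259970, 655520, 2367616],
   [526468, 4195472, 70272, 8329, 8519810, 295072, 3162240],
   [264322, 8389792, 49792, 4241, 2162820, 1179784, 4726912],
   [524929, 8390800, 148608, 8356, 2130050, 327816, 5247104],
   [1049218, 4196488, 74880, 16545, 8421508, 393360, 2625664]],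
  [[1050884, 4195080, 50432, 8465, 2228482, 327968, 8917248],
   [264449, 8389896, 82688, 4372, 4227330, 1179936, 2629888],
   [526594, 4195616, 135936, 8460, 8421633, 1114384, 2375936],
   [525569, 4196624, 41728, 16676, 8454402, 393480, 3150080],
   [262914, 2098448, 76032, 4385, 8519940, 1081608, 4735232],
   [1049345, 8390944, 140544, 16658, 2130180, 590088, 4460800],
   [525060, 2099464, 70912, 8482, 4325633, 295184, 9453824],
   [1049858, 2097952, 39168, 16649, 4260100, 655632, 8659200],
   [263428, 8389392, 149760, 4362, 2162945, 557344, 5251328]],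
  [[2097736, 1049218, 41728, 131604, 528928, 4211201, 8716800],
   [4194896, 262914, 49792, 66060, 1057312, 2101761, 9044480],
   [8389216, 1049345, 70272, 131594, 270864, 2114052, 4751872],
   [8389392, 1049156, 139904, 33289, 279072, 4198914, 2687488],
   [4194976, 525060, 148032, 66065, 266760, 2105858, 9470464],
   [2097808, 262721, 135936, 33316, 533000, 8405506, 5308928],
   [8389256, 524866, 82688, 131617, 1053200, 4203012, 2392576],
   [2097952, 524929, 74304, 33298, 1065480, 8393220, 4588032],
   [4195080, 262788, 37440, 66082, 541200, 8397313, 3277312]],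
  [[4195472, 263428, 83008, 33825, 1057800, 8393730, 2753536],
   [8389792, 525380, 70912, 132113, 279560, 4203522, 3179520],
   [2098312, 263234, 140544, 33812, 541728, 4199425, 9503744],
   [2098272, 263297, 50432, 66578, 529416, 8397828, 5374976],
   [8389896, 1049665, 38016, 132130, 533520, 4211716, 2425856],
   [4195616, 525442, 42048, 66569, 1066000, 2102276, 8782848],
   [2098448, 1049732, 136256, 33802, 271392, 8406017, 4785152],
   [4195400, 1049858, 148608, 66596, 267280, 2106369, 8946688],
   [8389712, 525569, 74880, 132108, 1053728, 2114562, 4490240]],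
  [[8390944, 526401, 137344, 67594, 280592, 2107396, 5277696],
   [2099464, 1050753, 141376, 34850, 530448, 8407044, 4524032],
   [4196624, 526468, 51264, 67617, 1054728, 8398850, 2492416],
   [4196488, 526594, 71744, 133156, 1058832, 2115585, 8685568],
   [2099280, 264322, 76032, 34828, 1067040, 8394753, 4851712],
   [8390728, 1050884, 84096, 133138, 268320, 4204545, 2656256],
   [4196448, 264449, 43136, 67604, 542728, 2103298, 9570304],
   [8390800, 264260, 39168, 133129, 534560, 4212738, 3213312],
   [2099360, 1050690, 149760, 34833, 272392, 4200452, 8980480]],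
  [[299009, 4263968, 136256, 8917248, 1053200, 2103298, 4236],
   [561154, 4329480, 71744, 8654976, 1053728, 2101761, 4372],
   [1085444, 2232352, 70272, 4460800, 529416, 8394753, 4178],
   [659460, 8425504, 70912, 2363456, 1054728, 4198914, 4241],
   [1118210, 8523792, 39168, 2625664, 266760, 4199425, 4196],
   [593921, 2134024, 135936, 9441344, 267280, 4200452, 4258],
   [331780, 4231184, 137344, 3150080, 528928, 8393730, 4169],
   [1183745, 2166800, 38016, 4722752, 268320, 8393220, 4362],
   [397314, 8458248, 37440, 5247104, 530448, 2102276, 4385]],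
  [[598018, 8527880, 43136, 3153984, 271392, 4203012, 8465],
   [1122308, 8429584, 139904, 2629888, 272392, 4203522, 8289],
   [335873, 4235272, 140544, 8921152, 1058832, 2105858, 8356],
   [1089537, 2170888, 141376, 4726912, 270864, 8397828, 8482],
   [401412, 2138144, 74304, 5251328, 533520, 8398850, 8329],
   [1187842, 4268048, 42048, 2367616, 534560, 8397313, 8460],
   [663553, 8462368, 41728, 4464704, 1057800, 2107396, 8338],
   [303106, 4333600, 76032, 9445504, 533000, 2106369, 8276],
   [565252, 2236432, 74880, 8659200, 1057312, 4204545, 8266]],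
  [[1196036, 2146320, 82688, 4472960, 542728, 8406017, 16482],
   [409601, 2179104, 50432, 5259328, 541200, 8407044, 16522],
   [671746, 8470544, 51264, 3162240, 279072, 4211716, 16649],
   [344066, 4341776, 49792, 9453824, 541728, 2115585, 16460],
   [573441, 4276232, 148608, 8667200, 1067040, 2114052, 16658],
   [311300, 8536096, 84096, 4735232, 1065480, 2114562, 16465],
   [1097730, 2244616, 83008, 8929408, 280592, 4211201, 16676],
   [606212, 8437768, 148032, 2375936, 1066000, 4212738, 16545],
   [1130497, 4243488, 149760, 2637888, 279560, 8405506, 16532]],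
  [[2134024, 565252, 49792, 5277696, 8421442, 295184, 33825],
   [4231184, 573441, 41728, 3179520, 8421508, 294984, 34850],
   [8425504, 311300, 42048, 2656256, 4227201, 1081608, 33298],
   [4243488, 1085444, 43136, 2392576, 8421633, 557136, 33802],
   [8429584, 1097730, 39168, 4490240, 2129985, 557192, 33316],
   [4235272, 299009, 51264, 9470464, 2130050, 557344, 33812],
   [2138144, 561154, 50432, 8685568, 4227140, 1081488, 33289],
   [8437768, 303106, 38016, 4751872, 2130180, 1081440, 34833],
   [2146320, 1089537, 37440, 8946688, 4227330, 295072, 34828]],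
  [[4268048, 1130497, 70912, 8716800, 2162820, 589920, 67594],
   [8462368, 1118210, 83008, 4524032, 2162945, 589968, 66060],
   [2170888, 593921, 84096, 5308928, 8454402, 327760, 66596],
   [8458248, 335873, 82688, 4785152, 2162754, 1114272, 67604],
   [2179104, 331780, 74304, 8980480, 4259970, 1114384, 66569],
   [8470544, 598018, 70272, 2425856, 4260100, 1114184, 67617],
   [4276232, 1122308, 71744, 2687488, 8454273, 327968, 66578],
   [2166800, 606212, 76032, 9503744, 4259905, 327816, 66082],
   [4263968, 344066, 74880, 3213312, 8454212, 590088, 66065]],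
  [[8536096, 397314, 141376, 2753536, 4325633, 1179784, 131604],
   [2244616, 401412, 137344, 9044480, 4325442, 1179936, 132113],
   [4341776, 1187842, 135936, 8782848, 2228292, 655520, 133129],
   [2236432, 671746, 136256, 9570304, 4325508, 393480, 131617],
   [4329480, 663553, 148608, 3277312, 8519940, 393312, 133138],
   [2232352, 1196036, 140544, 4851712, 8519745, 393360, 131594],
   [8523792, 409601, 139904, 5374976, 2228482, 655432, 133156],
   [4333600, 1183745, 148032, 2492416, 8519810, 655632, 132108],
   [8527880, 659460, 149760, 4588032, 2228353, 1179728, 132130]],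
  [[2363456, 4524032, 8650769, 401412, 279560, 295072, 262914],
   [2367616, 8716800, 4456481, 397314, 280592, 294984, 263428],
   [2375936, 8685568, 4456458, 331780, 270864, 393312, 263297],
   [8659200, 2492416, 4456468, 299009, 279072, 327816, 263234],
   [4472960, 8782848, 2359332, 303106, 266760, 327760, 264449],
   [4464704, 2392576, 8650764, 409601, 267280, 327968, 264322],
   [4460800, 2425856, 8650786, 311300, 272392, 393360, 262721],
   [8667200, 4490240, 2359314, 335873, 268320, 393480, 262788],
   [8654976, 4588032, 2359305, 344066, 271392, 295184, 264260]],
  [[4726912, 9044480, 2621474, 573441, 530448, 590088, 525380],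
   [4735232, 2753536, 8912906, 565252, 528928, 589968, 526401],
   [4722752, 2687488, 8912916, 663553, 541728, 557192, 526594],
   [2637888, 4751872, 8912929, 598018, 529416, 655632, 526468],
   [8917248, 2656256, 4718601, 606212, 533520, 655520, 524866],
   [8929408, 4785152, 2621457, 561154, 534560, 655432, 525060],
   [8921152, 4851712, 2621452, 593921, 541200, 557344, 525442],
   [2625664, 8980480, 4718628, 671746, 533000, 557136, 525569],
   [2629888, 8946688, 4718610, 659460, 542728, 589920, 524929]],
  [[9453824, 3179520, 5242892, 1118210, 1057312, 1179728, 1050753],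
   [9441344, 5277696, 3145748, 1130497, 1057800, 1179936, 1049218],
   [9445504, 5374976, 3145761, 1097730, 1054728, 1114384, 1049156],
   [5247104, 9503744, 3145738, 1196036, 1058832, 1081440, 1049345],
   [3153984, 5308928, 9437202, 1183745, 1067040, 1081608, 1049732],
   [3150080, 9570304, 5242914, 1122308, 1065480, 1081488, 1049665],
   [3162240, 9470464, 5242897, 1187842, 1053728, 1114184, 1050884],
   [5251328, 3277312, 9437193, 1085444, 1066000, 1114272, 1050690],
   [5259328, 3213312, 9437220, 1089537, 1053200, 1179784, 1049858]],
  [[2392576, 2629888, 3145738, 2179104, 2228353, 2102276, 2099280],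
   [2425856, 3153984, 2621452, 2146320, 2228482, 2101761, 2099360],
   [2492416, 3150080, 2621457, 2138144, 2162754, 2114052, 2098312],
   [3213312, 2375936, 2621474, 2134024, 2228292, 2106369, 2097808],
   [2753536, 3162240, 2359332, 2166800, 2129985, 2105858, 2099464],
   [2687488, 2363456, 3145761, 2244616, 2130050, 2107396, 2098448],
   [2656256, 2367616, 3145748, 2232352, 2162945, 2114562, 2097736],
   [3277312, 2625664, 2359314, 2170888, 2130180, 2115585, 2098272],
   [3179520, 2637888, 2359305, 2236432, 2162820, 2103298, 2097952]],
  [[4785152, 5259328, 4456468, 4329480, 4227330, 4204545, 4194976],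
   [4851712, 4472960, 5242897, 4263968, 4227140, 4203522, 4195080],
   [4751872, 4464704, 5242914, 4276232, 4325508, 4199425, 4196624],
   [4588032, 4722752, 5242892, 4268048, 4227201, 4212738, 4195616],
   [5277696, 4460800, 4718601, 4333600, 4259970, 4211716, 4194896],
   [5374976, 4726912, 4456458, 4231184, 4260100, 4211201, 4196448],
   [5308928, 4735232, 4456481, 4235272, 4325442, 4200452, 4195472],
   [4490240, 5251328, 4718628, 4341776, 4259905, 4198914, 4196488],
   [4524032, 5247104, 4718610, 4243488, 4325633, 4203012, 4195400]],
  [[9570304, 8654976, 8912929, 8429584, 8454212, 8405506, 8389896],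
   [9470464, 8917248, 8650786, 8527880, 8454273, 8407044, 8389712],
   [9503744, 8929408, 8650764, 8523792, 8421633, 8398850, 8389216],
   [8946688, 9445504, 8650769, 8536096, 8454402, 8393220, 8390728],
   [8716800, 8921152, 9437202, 8437768, 8519940, 8394753, 8389792],
   [8685568, 9453824, 8912916, 8462368, 8519745, 8393730, 8389256],
   [8782848, 9441344, 8912906, 8470544, 8421508, 8397313, 8390944],
   [8980480, 8667200, 9437193, 8425504, 8519810, 8397828, 8389392],
   [9044480, 8659200, 9437220, 8458248, 8421442, 8406017, 8390800]]]

/-- Blocks through `x`, sorted into classes. -/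
def fl (x : ℕ) : List ℕ := (tab.getD x []).flatten

def cl (x c : ℕ) : List ℕ := (tab.getD x []).getD c []

def chkA : Bool := (List.range 24).all fun x => (List.range 24).all fun y =>
  x / 3 == y / 3 ||
    (fun L : List ℕ => (List.range 24).all fun z => x / 3 == z / 3 || y / 3 == z / 3 ||
      (L.filter fun m => m.testBit z).length == 1) ((fl x).filter fun m => m.testBit y)

def chkB : Bool := (List.range 24).all fun x => (fl x).all fun m => (List.range 24).all fun y =>
  !(m.testBit y) || (fl y).elem m

def chkC : Bool := (List.range 24).all fun x => (List.range 9).all fun c =>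
  (List.range 24).all fun y => x / 3 == y / 3 ||
    ((cl x c).filter fun m => m.testBit y).length == 1

def chkD : Bool := (List.range 24).all fun x => (fl x).all fun m => m.testBit x &&
  (decide (m < 2 ^ 24) && (((List.range 24).filter fun p => m.testBit p).length == 4 &&
    (List.range 24).all fun y => !(x / 3 == y / 3) || (x == y || !(m.testBit y))))

def chkE : Bool := (List.range 24).all fun x => (List.range 9).all fun c =>
  (List.range 9).all fun d => c == d || (cl x c).all fun m => !((cl x d).elem m)

def chkF : Bool := tab.length == 24 && tab.all fun r => r.length == 9

theorem hA : chkA = true := by decide +kernel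
theorem hB : chkB = true := by decide +kernel
theorem hC : chkC = true := by decide +kernel
theorem hD : chkD = true := by decide +kernel
theorem hE : chkE = true := by decide +kernel
theorem hF : chkF = true := by decide +kernel

theorem len1_unique {p : ℕ → Bool} {L : List ℕ} (h : (L.filter p).length = 1) :
    ∃ m, (m ∈ L ∧ p m = true) ∧ ∀ m', m' ∈ L → p m' = true → m' = m := by
  obtain ⟨m, hm⟩ := List.length_eq_one_iff.1 h
  refine ⟨m, ?_, ?_⟩
  · have : m ∈ L.filter p := by rw [hm]; simp
    simpa using this
  · intro m' h1 h2
    have : m' ∈ L.filter p := by simp [h1, h2]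
    rw [hm] at this
    simpa using this

theorem pA {x y z : ℕ} (hx : x < 24) (hy : y < 24) (hz : z < 24) (hxy : x / 3 ≠ y / 3)
    (hxz : x / 3 ≠ z / 3) (hyz : y / 3 ≠ z / 3) :
    ∃ m, (m ∈ fl x ∧ m.testBit y = true ∧ m.testBit z = true) ∧
      ∀ m', m' ∈ fl x → m'.testBit y = true → m'.testBit z = true → m' = m := by
  have h := hA
  simp only [chkA, List.all_eq_true, List.mem_range, Bool.or_eq_true, beq_iff_eq] at h
  have h1 := (h x hx y hy).resolve_left hxy z hz
  have h2 := h1.resolve_left (by simp [hxz, hyz])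
  obtain ⟨m, ⟨a, b⟩, c⟩ := len1_unique h2
  rw [List.mem_filter] at a
  exact ⟨m, ⟨a.1, a.2, b⟩, fun m' q r s => c m' (List.mem_filter.2 ⟨q, r⟩) s⟩

theorem pB {x y m : ℕ} (hx : x < 24) (hy : y < 24) (hm : m ∈ fl x) (h1 : m.testBit y = true) :
    m ∈ fl y := by
  have h := hB
  simp only [chkB, List.all_eq_true, List.mem_range, Bool.or_eq_true] at h
  have h2 := (h x hx m hm y hy).resolve_left (by simp [h1])
  simpa using h2

theorem pC {x c y : ℕ} (hx : x < 24) (hc : c < 9) (hy : y < 24) (hxy : x / 3 ≠ y / 3) :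
    ∃ m, (m ∈ cl x c ∧ m.testBit y = true) ∧
      ∀ m', m' ∈ cl x c → m'.testBit y = true → m' = m := by
  have h := hC
  simp only [chkC, List.all_eq_true, List.mem_range, Bool.or_eq_true, beq_iff_eq] at h
  exact len1_unique ((h x hx c hc y hy).resolve_left hxy)

theorem pD {x m : ℕ} (hx : x < 24) (hm : m ∈ fl x) : m.testBit x = true ∧ m < 2 ^ 24 ∧
    ((List.range 24).filter fun p => m.testBit p).length = 4 ∧
    ∀ y < 24, m.testBit y = true → x / 3 = y / 3 → x = y := by
  have h := hD
  simp only [chkD, List.all_eq_true, List.mem_range, Bool.and_eq_true, beq_iff_eq,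
    decide_eq_true_eq] at h
  obtain ⟨a, b, c, d⟩ := h x hx m hm
  refine ⟨a, b, c, fun y hy h1 h2 => ?_⟩
  have := d y hy
  simpa [h1, h2] using this

theorem pE {x c d m : ℕ} (hx : x < 24) (hc : c < 9) (hd : d < 9) (h1 : m ∈ cl x c)
    (h2 : m ∈ cl x d) : c = d := by
  have h := hE
  simp only [chkE, List.all_eq_true, List.mem_range, Bool.or_eq_true, beq_iff_eq] at h
  rcases h x hx c hc d hd with h | h
  · exact h
  · have := h m h1
    simp [h2] at this

theorem pF {x m : ℕ} (hx : x < 24) : m ∈ fl x ↔ ∃ c < 9, m ∈ cl x c := by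
  have h := hF
  simp only [chkF, List.all_eq_true, Bool.and_eq_true, beq_iff_eq] at h
  obtain ⟨h1, h2⟩ := h
  have h3 : x < tab.length := by omega
  have h4 := h2 (tab[x]) (List.getElem_mem h3)
  have h5 : tab.getD x [] = tab[x] := by simp [h3]
  rw [fl]
  simp only [cl, h5]
  generalize tab[x] = r at h4
  rw [List.mem_flatten]
  constructor
  · rintro ⟨l, hl, hm⟩
    obtain ⟨c, hc, rfl⟩ := List.getElem_of_mem hl
    exact ⟨c, by omega, by simpa [hc] using hm⟩
  · rintro ⟨c, hc, hm⟩
    have hc' : c < r.length := by omega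
    exact ⟨r[c], List.getElem_mem hc', by simpa [hc'] using hm⟩

/-- The point set coded by a bit mask. -/
def S (m : ℕ) : Finset ℕ := (range 24).filter fun p => m.testBit p = true

theorem mem_S {m p : ℕ} : p ∈ S m ↔ p < 24 ∧ m.testBit p = true := by simp [S]

theorem S_card {x m : ℕ} (hx : x < 24) (hm : m ∈ fl x) : (S m).card = 4 := by
  have h := (pD hx hm).2.2.1
  have h2 : S m = ((List.range 24).filter fun p => m.testBit p).toFinset := by
    ext p; simp [mem_S]
  rw [h2, List.toFinset_card_of_nodup (List.nodup_range.filter _), h]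

theorem S_inj {m m' : ℕ} (h : m < 2 ^ 24) (h' : m' < 2 ^ 24) (he : S m = S m') : m = m' := by
  apply Nat.eq_of_testBit_eq
  intro i
  by_cases hi : i < 24
  · have : i ∈ S m ↔ i ∈ S m' := by rw [he]
    simp only [mem_S, hi, true_and] at this
    exact Bool.eq_iff_iff.2 this
  · have hp : 2 ^ 24 ≤ 2 ^ i := Nat.pow_le_pow_right (by norm_num) (by omega)
    rw [Nat.testBit_lt_two_pow (h.trans_le hp), Nat.testBit_lt_two_pow (h'.trans_le hp)]

def theB : Finset (Finset ℕ) := (range 24).biUnion fun x => (fl x).toFinset.image S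

theorem mem_B {b : Finset ℕ} : b ∈ theB ↔ ∃ x < 24, ∃ m ∈ fl x, S m = b := by
  simp [theB]

def grp (a : ℕ) : Finset ℕ := (range 24).filter fun p => p / 3 = a

def theG : Finset (Finset ℕ) := (range 8).image grp

theorem mem_grp {a p : ℕ} : p ∈ grp a ↔ p < 24 ∧ p / 3 = a := by simp [grp]

theorem mem_G {G : Finset ℕ} : G ∈ theG ↔ ∃ a < 8, grp a = G := by simp [theG]

theorem isGDD : IsGDD 3 {4} 3 8 (range 24) theG theB := by
  refine ⟨by simp, by decide +kernel, ?_, ?_, ?_, ?_, ?_⟩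
  · decide +kernel
  · intro x hx
    rw [mem_range] at hx
    refine ⟨grp (x / 3), ⟨mem_G.2 ⟨x / 3, by omega, rfl⟩, mem_grp.2 ⟨hx, rfl⟩⟩, ?_⟩
    rintro G ⟨hG, hxG⟩
    obtain ⟨a, ha, rfl⟩ := mem_G.1 hG
    rw [(mem_grp.1 hxG).2]
  · intro b hb
    obtain ⟨x, hx, m, hm, rfl⟩ := mem_B.1 hb
    exact ⟨filter_subset _ _, S_card hx hm⟩
  · intro b hb G hG
    obtain ⟨x, hx, m, hm, rfl⟩ := mem_B.1 hb
    obtain ⟨a, ha, rfl⟩ := mem_G.1 hG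
    rw [card_le_one]
    intro p hp q hq
    rw [mem_inter, mem_S, mem_grp] at hp hq
    exact (pD hp.1.1 (pB hx hp.1.1 hm hp.1.2)).2.2.2 q hq.1.1 hq.1.2 (by rw [hp.2.2, hq.2.2])
  · intro T hT hc hG
    have key : ∀ p ∈ T, ∀ q ∈ T, p ≠ q → p / 3 ≠ q / 3 := by
      intro p hp q hq hne he
      have hp' := mem_range.1 (hT hp)
      have hq' := mem_range.1 (hT hq)
      have := hG (grp (p / 3)) (mem_G.2 ⟨p / 3, by omega, rfl⟩)
      rw [card_le_one] at this
      exact hne (this p (mem_inter.2 ⟨hp, mem_grp.2 ⟨hp', rfl⟩⟩) q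
        (mem_inter.2 ⟨hq, mem_grp.2 ⟨hq', he.symm⟩⟩))
    obtain ⟨x, y, z, hxy, hxz, hyz, rfl⟩ := card_eq_three.1 hc
    have hx : x < 24 := mem_range.1 (hT (by simp))
    have hy : y < 24 := mem_range.1 (hT (by simp))
    have hz : z < 24 := mem_range.1 (hT (by simp))
    obtain ⟨m, ⟨h1, h2, h3⟩, hu⟩ := pA hx hy hz (key x (by simp) y (by simp) hxy)
      (key x (by simp) z (by simp) hxz) (key y (by simp) z (by simp) hyz)
    refine ⟨S m, ⟨mem_B.2 ⟨x, hx, m, h1, rfl⟩, ?_⟩, ?_⟩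
    · intro p hp
      simp only [mem_insert, mem_singleton] at hp
      rcases hp with rfl | rfl | rfl
      · exact mem_S.2 ⟨hx, (pD hx h1).1⟩
      · exact mem_S.2 ⟨hy, h2⟩
      · exact mem_S.2 ⟨hz, h3⟩
    · rintro b ⟨hb, hs⟩
      obtain ⟨x', hx', m', hm', rfl⟩ := mem_B.1 hb
      have a1 := (mem_S.1 (hs (show x ∈ _ by simp))).2
      have a2 := (mem_S.1 (hs (show y ∈ _ by simp))).2
      have a3 := (mem_S.1 (hs (show z ∈ _ by simp))).2
      rw [hu m' (pB hx' hx hm' a1) a2 a3]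

theorem isRes {x : ℕ} (hx : x < 24) :
    Resolvable (range 24 \ grp (x / 3)) (derivedBlocks theB x) := by
  have hcl : ∀ (i : Fin 9) {m}, m ∈ cl x i → m ∈ fl x := fun i m hm => (pF hx).2 ⟨i, i.2, hm⟩
  refine ⟨9, fun i => (cl x i).toFinset.image fun m => (S m).erase x, ?_, ?_, ?_⟩
  · intro i
    constructor
    · intro b hb
      simp only [mem_image, List.mem_toFinset] at hb
      obtain ⟨m, hm, rfl⟩ := hb
      intro p hp
      rw [mem_erase, mem_S] at hp
      rw [mem_sdiff, mem_range, mem_grp]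
      refine ⟨hp.2.1, fun h => hp.1 ?_⟩
      exact ((pD hx (hcl i hm)).2.2.2 p hp.2.1 hp.2.2 h.2.symm).symm
    · intro y hy
      rw [mem_sdiff, mem_range, mem_grp] at hy
      have hne : x / 3 ≠ y / 3 := fun h => hy.2 ⟨hy.1, h.symm⟩
      have hne' : y ≠ x := by rintro rfl; exact hne rfl
      obtain ⟨m, ⟨h1, h2⟩, hu⟩ := pC hx i.2 hy.1 hne
      refine ⟨(S m).erase x, ⟨?_, mem_erase.2 ⟨hne', mem_S.2 ⟨hy.1, h2⟩⟩⟩, ?_⟩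
      · exact mem_image.2 ⟨m, by simpa using h1, rfl⟩
      · rintro b ⟨hb, hyb⟩
        simp only [mem_image, List.mem_toFinset] at hb
        obtain ⟨m', hm', rfl⟩ := hb
        rw [hu m' hm' (mem_S.1 (mem_erase.1 hyb).2).2]
  · intro i b hb
    simp only [mem_image, List.mem_toFinset] at hb
    obtain ⟨m, hm, rfl⟩ := hb
    have hm' := hcl i hm
    exact mem_image.2 ⟨S m, mem_filter.2 ⟨mem_B.2 ⟨x, hx, m, hm', rfl⟩,
      mem_S.2 ⟨hx, (pD hx hm').1⟩⟩, rfl⟩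
  · intro b hb
    obtain ⟨b', hb', rfl⟩ := mem_image.1 hb
    obtain ⟨hB', hxb⟩ := mem_filter.1 hb'
    obtain ⟨x', hx', m, hm, rfl⟩ := mem_B.1 hB'
    have hm2 := pB hx' hx hm (mem_S.1 hxb).2
    obtain ⟨c, hc, hmc⟩ := (pF hx).1 hm2
    refine ⟨⟨c, hc⟩, mem_image.2 ⟨m, by simpa using hmc, rfl⟩, ?_⟩
    intro j hj
    simp only [mem_image, List.mem_toFinset] at hj
    obtain ⟨m', hm', he⟩ := hj
    have hm3 := hcl j hm'
    have hS : S m' = S m := by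
      rw [← insert_erase hxb, ← he, insert_erase (mem_S.2 ⟨hx, (pD hx hm3).1⟩)]
    have := S_inj (pD hx hm3).2.1 (pD hx hm2).2.1 hS
    subst this
    exact Fin.ext (pE hx j.2 hc hm' hmc)

/-- There exists an RDGDD(3, 4, 24) of type 3^8. -/
theorem stmt_2 : ∃ X Gs Bs, IsRDGDD 3 {4} 3 8 X Gs Bs := by
  refine ⟨range 24, theG, theB, isGDD, ?_⟩
  intro x hx G hG hxG
  rw [mem_range] at hx
  obtain ⟨a, ha, rfl⟩ := mem_G.1 hG
  obtain rfl := (mem_grp.1 hxG).2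
  exact isRes hx
end

section
/- There exists an RDGDD(3, 4, 42) of type 3^14, i.e., a group divisible design GDD(3, 4, 42) of type 3^14 whose derived design at every point is resolvable. -/
open Finset

def dSL : List (List ℕ × ℕ) := [
  ([0,1,2,8],0), ([0,1,3,12],1), ([0,1,4,5],2), ([0,1,6,13],2), ([0,1,7,11],0), ([0,1,9,10],0),
  ([0,2,3,4],1), ([0,2,5,6],0), ([0,2,7,10],0), ([0,2,9,13],0), ([0,2,11,12],0), ([0,3,5,10],0),
  ([0,3,6,8],1), ([0,3,7,13],0), ([0,3,9,11],0), ([0,4,6,11],2), ([0,4,7,8],0), ([0,4,9,12],0),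
  ([0,4,10,13],0), ([0,5,7,12],1), ([0,5,8,9],0), ([0,5,11,13],2), ([0,6,7,9],0), ([0,6,10,12],0),
  ([0,8,10,11],1), ([0,8,12,13],1), ([1,2,3,6],0), ([1,2,4,7],1), ([1,2,5,12],1), ([1,2,9,11],1),
  ([1,2,10,13],0), ([1,3,4,9],0), ([1,3,5,13],0), ([1,3,7,8],0), ([1,3,10,11],0), ([1,4,6,8],0),
  ([1,4,10,12],0), ([1,4,11,13],2), ([1,5,6,11],2), ([1,5,7,9],0), ([1,5,8,10],0), ([1,6,7,10],0),
  ([1,6,9,12],1), ([1,7,12,13],0), ([1,8,9,13],1), ([1,8,11,12],0), ([2,3,5,9],0), ([2,3,7,12],2),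
  ([2,3,8,10],2), ([2,3,11,13],0), ([2,4,5,10],0), ([2,4,6,9],0), ([2,4,8,11],1), ([2,4,12,13],0),
  ([2,5,7,11],0), ([2,5,8,13],0), ([2,6,7,13],0), ([2,6,8,12],0), ([2,6,10,11],1), ([2,7,8,9],2),
  ([2,9,10,12],2), ([3,4,5,7],1), ([3,4,6,10],1), ([3,4,8,13],0), ([3,4,11,12],0), ([3,5,6,12],0),
  ([3,5,8,11],0), ([3,6,7,11],0), ([3,6,9,13],1), ([3,7,9,10],2), ([3,8,9,12],2), ([3,10,12,13],0),
  ([4,5,6,13],2), ([4,5,8,12],0), ([4,5,9,11],0), ([4,6,7,12],0), ([4,7,9,13],1), ([4,7,10,11],0),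
  ([4,8,9,10],0), ([5,6,7,8],0), ([5,6,9,10],1), ([5,7,10,13],1), ([5,9,12,13],0), ([5,10,11,12],1),
  ([6,8,9,11],0), ([6,8,10,13],0), ([6,11,12,13],0), ([7,8,10,12],2), ([7,8,11,13],1), ([7,9,11,12],0),
  ([9,10,11,13],0)]

def dR0 : List (List (List ℕ)) := [
  [[3,6,24], [4,12,16], [5,21,34], [7,29,39], [8,10,13], [9,28,35], [11,17,32], [14,23,26], [15,33,41], [18,30,36], [19,31,37], [20,22,27], [25,38,40]],
  [[3,7,26], [4,19,39], [5,14,16], [6,21,30], [8,17,20], [9,27,33], [10,28,34], [11,29,35], [12,32,40], [13,23,24], [15,22,36], [18,31,38], [25,37,41]],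
  [[3,8,25], [4,21,35], [5,27,31], [6,17,19], [7,11,13], [9,29,34], [10,15,32], [12,20,33], [14,30,40], [16,22,38], [18,23,28], [24,37,39], [26,36,41]],
  [[3,9,37], [4,20,41], [5,29,32], [6,23,31], [7,10,14], [8,35,38], [11,16,30], [12,22,26], [13,19,33], [15,34,40], [17,24,28], [18,21,27], [25,36,39]],
  [[3,10,36], [4,14,17], [5,28,30], [6,29,40], [7,34,37], [8,15,19], [9,21,39], [11,23,41], [12,18,35], [13,22,25], [16,26,27], [20,32,38], [24,31,33]],
  [[3,11,38], [4,27,32], [5,12,15], [6,28,41], [7,23,30], [8,33,37], [9,17,31], [10,20,25], [13,21,26], [14,19,35], [16,34,39], [18,22,29], [24,36,40]],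
  [[3,12,17], [4,6,26], [5,7,24], [8,21,31], [9,22,41], [10,23,39], [11,27,34], [13,20,35], [14,28,36], [15,25,29], [16,33,40], [18,32,37], [19,30,38]],
  [[3,13,16], [4,29,30], [5,22,33], [6,34,38], [7,15,20], [8,28,39], [9,18,25], [10,19,26], [11,21,40], [12,31,41], [14,27,37], [17,23,36], [24,32,35]],
  [[3,14,15], [4,18,40], [5,11,36], [6,35,37], [7,21,32], [8,29,41], [9,20,26], [10,16,31], [12,23,25], [13,27,38], [17,33,39], [19,22,28], [24,30,34]],
  [[3,18,41], [4,28,31], [5,13,17], [6,27,39], [7,35,36], [8,22,30], [9,16,32], [10,29,33], [11,19,25], [12,21,24], [14,20,34], [15,23,38], [26,37,40]],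
  [[3,19,40], [4,22,34], [5,6,25], [7,17,18], [8,9,14], [10,27,35], [11,15,31], [12,30,39], [13,29,36], [16,23,37], [20,21,28], [24,38,41], [26,32,33]],
  [[3,20,39], [4,10,38], [5,23,35], [6,15,18], [7,9,12], [8,27,40], [11,28,33], [13,30,41], [14,21,25], [16,24,29], [17,22,37], [19,32,36], [26,31,34]],
  [[3,21,33], [4,8,24], [5,19,41], [6,16,20], [7,22,31], [9,23,40], [10,17,30], [11,18,26], [12,27,36], [13,28,37], [14,29,38], [15,35,39], [25,32,34]],
  [[3,22,35], [4,9,36], [5,18,39], [6,11,14], [7,33,38], [8,23,32], [10,21,41], [12,19,34], [13,31,40], [15,24,27], [16,25,28], [17,26,29], [20,30,37]],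
  [[3,23,34], [4,11,37], [5,9,38], [6,10,12], [7,27,41], [8,16,18], [13,32,39], [14,22,24], [15,26,28], [17,35,40], [19,21,29], [20,31,36], [25,30,33]],
  [[3,27,30], [4,13,15], [5,10,37], [6,22,32], [7,28,40], [8,11,12], [9,19,24], [14,18,33], [16,21,36], [17,34,41], [20,23,29], [25,31,35], [26,38,39]],
  [[3,28,32], [4,7,25], [5,8,26], [6,33,36], [9,15,30], [10,22,40], [11,20,24], [12,29,37], [13,18,34], [14,31,39], [16,35,41], [17,21,38], [19,23,27]],
  [[3,29,31], [4,23,33], [5,20,40], [6,9,13], [7,16,19], [8,34,36], [10,18,24], [11,22,39], [12,28,38], [14,32,41], [15,21,37], [17,25,27], [26,30,35]]]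

def dR1 : List (List (List ℕ)) := [
  [[3,6,26], [4,11,36], [5,18,41], [7,17,20], [8,23,31], [9,29,33], [10,21,40], [12,27,38], [13,19,35], [14,30,39], [15,25,28], [16,22,37], [24,32,34]],
  [[3,7,25], [4,9,38], [5,27,30], [6,29,39], [8,35,37], [10,15,31], [11,20,26], [12,23,24], [13,18,33], [14,32,40], [16,34,41], [17,22,36], [19,21,28]],
  [[3,8,24], [4,19,41], [5,23,34], [6,9,12], [7,21,31], [10,29,35], [11,18,25], [13,30,40], [14,27,36], [15,22,38], [16,33,39], [17,26,28], [20,32,37]],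
  [[3,9,36], [4,13,17], [5,29,31], [6,15,20], [7,28,39], [8,34,38], [10,16,30], [11,23,40], [12,21,26], [14,18,35], [19,22,27], [24,37,41], [25,32,33]],
  [[3,10,38], [4,20,40], [5,8,25], [6,16,19], [7,22,30], [9,23,39], [11,28,35], [12,18,34], [13,32,41], [14,29,37], [15,21,36], [17,24,27], [26,31,33]],
  [[3,11,37], [4,29,32], [5,6,24], [7,34,36], [8,28,41], [9,17,30], [10,19,25], [12,20,35], [13,31,39], [14,22,26], [15,33,40], [16,21,38], [18,23,27]],
  [[3,12,16], [4,28,30], [5,11,38], [6,27,41], [7,33,37], [8,17,19], [9,15,32], [10,22,39], [13,20,34], [14,23,25], [18,21,29], [24,31,35], [26,36,40]],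
  [[3,13,15], [4,21,34], [5,19,40], [6,22,31], [7,11,12], [8,16,20], [9,27,35], [10,23,41], [14,28,38], [17,25,29], [18,32,36], [24,30,33], [26,37,39]],
  [[3,14,17], [4,27,31], [5,21,33], [6,34,37], [7,29,41], [8,10,12], [9,20,25], [11,15,30], [13,23,26], [16,35,40], [18,22,28], [19,32,38], [24,36,39]],
  [[3,18,40], [4,22,33], [5,7,26], [6,23,30], [8,11,14], [9,28,34], [10,20,24], [12,32,39], [13,29,38], [15,35,41], [16,25,27], [17,21,37], [19,31,36]],
  [[3,19,39], [4,7,24], [5,9,37], [6,21,32], [8,15,18], [10,27,34], [11,22,41], [12,31,40], [13,28,36], [14,20,33], [16,26,29], [17,23,38], [25,30,35]],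
  [[3,20,41], [4,14,16], [5,22,35], [6,17,18], [7,23,32], [8,9,13], [10,28,33], [11,21,39], [12,29,36], [15,26,27], [19,30,37], [24,38,40], [25,31,34]],
  [[3,21,35], [4,6,25], [5,20,39], [7,10,13], [8,22,32], [9,19,26], [11,27,33], [12,28,37], [14,31,41], [15,24,29], [16,23,36], [17,34,40], [18,30,38]],
  [[3,22,34], [4,12,15], [5,28,32], [6,11,13], [7,35,38], [8,27,39], [9,16,31], [10,18,26], [14,21,24], [17,33,41], [19,23,29], [20,30,36], [25,37,40]],
  [[3,23,33], [4,18,39], [5,12,17], [6,10,14], [7,15,19], [8,21,30], [9,22,40], [11,29,34], [13,27,37], [16,24,28], [20,31,38], [25,36,41], [26,32,35]],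
  [[3,27,32], [4,10,37], [5,14,15], [6,35,36], [7,16,18], [8,29,40], [9,21,41], [11,17,31], [12,19,33], [13,22,24], [20,23,28], [25,38,39], [26,30,34]],
  [[3,28,31], [4,8,26], [5,10,36], [6,33,38], [7,27,40], [9,18,24], [11,16,32], [12,30,41], [13,21,25], [14,19,34], [15,23,37], [17,35,39], [20,22,29]],
  [[3,29,30], [4,23,35], [5,13,16], [6,28,40], [7,9,14], [8,33,36], [10,17,32], [11,19,24], [12,22,25], [15,34,39], [18,31,37], [20,21,27], [26,38,41]]]

def dR2 : List (List (List ℕ)) := [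
  [[3,6,25], [4,11,38], [5,14,17], [7,10,12], [8,34,37], [9,16,30], [13,31,41], [15,35,40], [18,23,29], [19,21,27], [20,22,28], [24,32,33], [26,36,39]],
  [[3,7,24], [4,18,41], [5,21,35], [6,34,36], [8,16,19], [9,28,33], [10,23,40], [11,15,32], [12,31,39], [13,29,37], [14,22,25], [17,26,27], [20,30,38]],
  [[3,8,26], [4,9,37], [5,23,33], [6,15,19], [7,11,14], [10,22,41], [12,30,40], [13,28,38], [16,24,27], [17,34,39], [18,31,36], [20,21,29], [25,32,35]],
  [[3,9,38], [4,28,32], [5,18,40], [6,17,20], [7,27,39], [8,11,13], [10,29,34], [12,21,25], [14,23,24], [15,22,37], [16,33,41], [19,30,36], [26,31,35]],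
  [[3,10,37], [4,14,15], [5,6,26], [7,9,13], [8,33,38], [11,17,30], [12,32,41], [16,35,39], [18,21,28], [19,22,29], [20,23,27], [24,31,34], [25,36,40]],
  [[3,11,36], [4,22,35], [5,12,16], [6,28,39], [7,29,40], [8,27,41], [9,20,24], [10,17,31], [13,23,25], [14,18,34], [15,21,38], [19,32,37], [26,30,33]],
  [[3,12,15], [4,19,40], [5,10,38], [6,22,30], [7,23,31], [8,21,32], [9,27,34], [11,18,24], [13,20,33], [14,29,36], [16,26,28], [17,35,41], [25,37,39]],
  [[3,13,17], [4,10,36], [5,20,41], [6,21,31], [7,22,32], [8,23,30], [9,29,35], [11,19,26], [12,18,33], [14,28,37], [15,25,27], [16,34,40], [24,38,39]],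
  [[3,14,16], [4,21,33], [5,11,37], [6,27,40], [7,28,41], [8,29,39], [9,15,31], [10,18,25], [12,23,26], [13,19,34], [17,22,38], [20,32,36], [24,30,35]],
  [[3,18,39], [4,13,16], [5,9,36], [6,23,32], [7,21,30], [8,22,31], [10,19,24], [11,28,34], [12,27,37], [14,20,35], [15,26,29], [17,33,40], [25,38,41]],
  [[3,19,41], [4,12,17], [5,29,30], [6,9,14], [7,34,38], [8,35,36], [10,20,26], [11,23,39], [13,32,40], [15,24,28], [16,21,37], [18,22,27], [25,31,33]],
  [[3,20,40], [4,23,34], [5,8,24], [6,33,37], [7,15,18], [9,17,32], [10,21,39], [11,27,35], [12,28,36], [13,22,26], [14,30,41], [16,25,29], [19,31,38]],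
  [[3,21,34], [4,7,26], [5,19,39], [6,35,38], [8,15,20], [9,23,41], [10,16,32], [11,29,33], [12,22,24], [13,27,36], [14,31,40], [17,25,28], [18,30,37]],
  [[3,22,33], [4,20,39], [5,7,25], [6,29,41], [8,9,12], [10,15,30], [11,16,31], [13,18,35], [14,27,38], [17,21,36], [19,23,28], [24,37,40], [26,32,34]],
  [[3,23,35], [4,6,24], [5,13,15], [7,17,19], [8,28,40], [9,18,26], [10,27,33], [11,21,41], [12,29,38], [14,32,39], [16,22,36], [20,31,37], [25,30,34]],
  [[3,27,31], [4,8,25], [5,22,34], [6,11,12], [7,16,20], [9,21,40], [10,28,35], [13,30,39], [14,19,33], [15,23,36], [17,24,29], [18,32,38], [26,37,41]],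
  [[3,28,30], [4,29,31], [5,27,32], [6,16,18], [7,33,36], [8,10,14], [9,22,39], [11,20,25], [12,19,35], [13,21,24], [15,34,41], [17,23,37], [26,38,40]],
  [[3,29,32], [4,27,30], [5,28,31], [6,10,13], [7,35,37], [8,17,18], [9,19,25], [11,22,40], [12,20,34], [14,21,26], [15,33,39], [16,23,38], [24,36,41]]]

def dBlk (b : Finset ℕ) : Prop :=
  b ⊆ range 42 ∧ b.card = 4 ∧
    ∃ s ∈ dSL, b.image (· / 3) = s.1.toFinset ∧ (∑ p ∈ b, p) % 3 = s.2

open Classical in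
noncomputable def dBs : Finset (Finset ℕ) := ((range 42).powerset).filter dBlk

def dGs : Finset (Finset ℕ) := (range 14).image fun a => {3 * a, 3 * a + 1, 3 * a + 2}

theorem mem_dBs {b : Finset ℕ} : b ∈ dBs ↔ dBlk b := by
  unfold dBs
  simp only [mem_filter, mem_powerset, and_iff_right_iff_imp]
  exact fun h => h.1

def dchk1 : Bool := (List.range 14).all fun a => (List.range 14).all fun b => a == b ||
  (List.range 14).all fun c => a == c || b == c ||
    (((dSL.filter fun s => s.1.contains a).filter fun s => s.1.contains b).filter
      fun s => s.1.contains c).length == 1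

theorem dchk1_true : dchk1 = true := by decide +kernel

theorem dSL_wf : ∀ s ∈ dSL, s.1.toFinset.card = 4 ∧ (∀ a ∈ s.1, a < 14) ∧ s.2 < 3 := by
  decide +kernel

theorem dSL_uniq (a b c : ℕ) (ha : a < 14) (hb : b < 14) (hc : c < 14)
    (hab : a ≠ b) (hac : a ≠ c) (hbc : b ≠ c) :
    ∃ s ∈ dSL, (a ∈ s.1 ∧ b ∈ s.1 ∧ c ∈ s.1) ∧
      ∀ s' ∈ dSL, a ∈ s'.1 → b ∈ s'.1 → c ∈ s'.1 → s' = s := by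
  have h := dchk1_true
  unfold dchk1 at h
  rw [List.all_eq_true] at h
  have h := h a (List.mem_range.2 ha)
  rw [List.all_eq_true] at h
  have h := h b (List.mem_range.2 hb)
  simp only [Bool.or_eq_true, beq_iff_eq, hab, false_or, List.all_eq_true] at h
  have h := h c (List.mem_range.2 hc)
  simp only [hac, hbc, false_or] at h
  obtain ⟨s, hs⟩ := List.length_eq_one_iff.1 h
  have key : ∀ s', s' ∈ dSL ∧ a ∈ s'.1 ∧ b ∈ s'.1 ∧ c ∈ s'.1 ↔ s' = s := by
    intro s'
    rw [← List.mem_singleton, ← hs]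
    simp only [List.mem_filter, List.contains_iff_mem, and_assoc]
  obtain ⟨h1, h2⟩ := (key s).2 rfl
  exact ⟨s, h1, h2, fun s' h1 h2 h3 h4 => (key s').1 ⟨h1, h2, h3, h4⟩⟩

theorem dBlk_inj {b : Finset ℕ} (h : dBlk b) : Set.InjOn (· / 3) (b : Set ℕ) := by
  obtain ⟨_, h4, s, hs, hi, _⟩ := h
  apply Finset.card_image_iff.1
  rw [hi, (dSL_wf s hs).1, h4]

theorem triple_exists (p q r : ℕ) (hp : p < 42) (hq : q < 42) (hr : r < 42)
    (hpq : p / 3 ≠ q / 3) (hpr : p / 3 ≠ r / 3) (hqr : q / 3 ≠ r / 3) :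
    ∃! b, dBlk b ∧ {p, q, r} ⊆ b := by
  obtain ⟨s, hs, ⟨h1, h2, h3⟩, hu⟩ := dSL_uniq (p/3) (q/3) (r/3) (by omega) (by omega) (by omega)
    hpq hpr hqr
  obtain ⟨w1, w2, w3⟩ := dSL_wf s hs
  have hsub : ({p/3, q/3, r/3} : Finset ℕ) ⊆ s.1.toFinset := by
    intro x; simp only [mem_insert, mem_singleton, List.mem_toFinset]
    rintro (rfl | rfl | rfl) <;> assumption
  have hc3 : ({p/3, q/3, r/3} : Finset ℕ).card = 3 := Finset.card_eq_three.2
    ⟨_, _, _, hpq, hpr, hqr, rfl⟩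
  have hd : (s.1.toFinset \ {p/3, q/3, r/3}).card = 1 := by
    rw [card_sdiff_of_subset hsub, w1, hc3]
  obtain ⟨d, hd⟩ := Finset.card_eq_one.1 hd
  have hdm : d ∈ s.1.toFinset \ {p/3, q/3, r/3} := by rw [hd]; simp
  have hset : s.1.toFinset = {p/3, q/3, r/3, d} := by
    rw [← Finset.sdiff_union_of_subset hsub, hd]; ext; simp; tauto
  simp only [mem_sdiff, List.mem_toFinset, mem_insert, mem_singleton, not_or] at hdm
  obtain ⟨hds, hdp, hdq, hdr⟩ := hdm
  have hd14 := w2 d hds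
  have hcard : ∀ u, u / 3 = d → ({p, q, r, u} : Finset ℕ).card = 4 := by
    intro u hu
    rw [card_insert_of_notMem, card_insert_of_notMem, card_insert_of_notMem, card_singleton]
    all_goals simp only [mem_insert, mem_singleton, not_or]
    · rintro rfl; omega
    · exact ⟨by rintro rfl; omega, by rintro rfl; omega⟩
    · exact ⟨by rintro rfl; omega, by rintro rfl; omega, by rintro rfl; omega⟩
  have hsum : ∀ u, u / 3 = d → ∑ x ∈ ({p, q, r, u} : Finset ℕ), x = p + q + r + u := by
    intro u hu
    rw [sum_insert, sum_insert, sum_insert, sum_singleton]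
    · ring
    all_goals simp only [mem_insert, mem_singleton, not_or]
    · rintro rfl; omega
    · exact ⟨by rintro rfl; omega, by rintro rfl; omega⟩
    · exact ⟨by rintro rfl; omega, by rintro rfl; omega, by rintro rfl; omega⟩
  refine ⟨{p, q, r, 3 * d + (s.2 + 2 * (p + q + r)) % 3}, ⟨⟨?_, hcard _ (by omega), s, hs, ?_, ?_⟩, ?_⟩, ?_⟩
  · intro x; simp only [mem_insert, mem_singleton, mem_range]
    rintro (rfl | rfl | rfl | rfl) <;> omega
  · rw [hset]
    have : (3 * d + (s.2 + 2 * (p + q + r)) % 3) / 3 = d := by omega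
    simp only [image_insert, image_singleton, this]
  · rw [hsum _ (by omega)]; omega
  · intro x; simp only [mem_insert, mem_singleton]; tauto
  · rintro b ⟨⟨hb1, hb2, s', hs', hi, hm⟩, hT⟩
    have hinj := dBlk_inj ⟨hb1, hb2, s', hs', hi, hm⟩
    have hpb : p ∈ b := hT (by simp)
    have hqb : q ∈ b := hT (by simp)
    have hrb : r ∈ b := hT (by simp)
    have mm : ∀ x ∈ b, x / 3 ∈ s'.1 := fun x hx => by
      rw [← List.mem_toFinset, ← hi]; exact mem_image_of_mem _ hx
    have hss := hu s' hs' (mm _ hpb) (mm _ hqb) (mm _ hrb)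
    subst hss
    have : d ∈ b.image (· / 3) := by rw [hi]; simpa using hds
    obtain ⟨u, hub, hud⟩ := mem_image.1 this
    have hbe : {p, q, r, u} = b := by
      apply Finset.eq_of_subset_of_card_le
      · intro x; simp only [mem_insert, mem_singleton]
        rintro (rfl | rfl | rfl | rfl) <;> assumption
      · rw [hb2, hcard u hud]
    rw [← hbe, hsum u hud] at hm
    rw [← hbe]
    have : u = 3 * d + (s'.2 + 2 * (p + q + r)) % 3 := by omega
    rw [← this]

theorem dGs_mem {G : Finset ℕ} (h : G ∈ dGs) : ∃ a < 14, ∀ x, x ∈ G ↔ x / 3 = a := by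
  unfold dGs at h
  obtain ⟨a, ha, rfl⟩ := mem_image.1 h
  refine ⟨a, mem_range.1 ha, fun x => ?_⟩
  simp only [mem_insert, mem_singleton]; omega

theorem dGDD : IsGDD 3 {4} 3 14 (range 42) dGs dBs := by
  refine ⟨by simp, by decide +kernel, by decide +kernel, ?_, ?_, ?_, ?_⟩
  · intro x hx
    have hx := mem_range.1 hx
    refine ⟨{3 * (x / 3), 3 * (x / 3) + 1, 3 * (x / 3) + 2},
      ⟨mem_image.2 ⟨x / 3, mem_range.2 (by omega), rfl⟩, ?_⟩, ?_⟩
    · simp only [mem_insert, mem_singleton]; omega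
    · rintro G ⟨hG, hxG⟩
      obtain ⟨a, ha, h⟩ := dGs_mem hG
      ext y
      have := (h x).1 hxG
      rw [h y]; simp only [mem_insert, mem_singleton]; omega
  · intro b hb
    have := mem_dBs.1 hb
    exact ⟨this.1, this.2.1⟩
  · intro b hb G hG
    obtain ⟨a, ha, h⟩ := dGs_mem hG
    have hi := dBlk_inj (mem_dBs.1 hb)
    rw [Finset.card_le_one]
    intro x hx y hy
    rw [mem_inter, h] at hx hy
    exact hi hx.1 hy.1 (hx.2.trans hy.2.symm)
  · intro T hT h3 hG
    have hd : ∀ x ∈ T, ∀ y ∈ T, x ≠ y → x / 3 ≠ y / 3 := by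
      intro x hx y hy hne he
      have hx42 := mem_range.1 (hT hx)
      have := Finset.card_le_one.1 (hG {3 * (x / 3), 3 * (x / 3) + 1, 3 * (x / 3) + 2}
        (mem_image.2 ⟨x / 3, mem_range.2 (by omega), rfl⟩))
      refine hne (this x ?_ y ?_) <;>
        simp only [mem_inter, mem_insert, mem_singleton] <;> refine ⟨by assumption, by omega⟩
    obtain ⟨p, q, r, hpq, hpr, hqr, rfl⟩ := Finset.card_eq_three.1 h3
    have := triple_exists p q r (mem_range.1 (hT (by simp))) (mem_range.1 (hT (by simp)))
      (mem_range.1 (hT (by simp))) (hd _ (by simp) _ (by simp) hpq)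
      (hd _ (by simp) _ (by simp) hpr) (hd _ (by simp) _ (by simp) hqr)
    simpa only [mem_dBs] using this

/-- Resolvability at one point. -/
def dGood (x : ℕ) : Prop :=
  Resolvable ((range 42).filter fun y => y / 3 ≠ x / 3) (derivedBlocks dBs x)

/-- check for a base resolution -/
def dchkA (i : ℕ) (R : List (List (List ℕ))) : Bool :=
  R.all fun C =>
    (C.all fun t => t.length == 3 && t.all (fun y => 3 ≤ y && y < 42) &&
      (t.map (· / 3)).Nodup &&
      dSL.any (fun s => s.2 == (t.sum + i) % 3 && s.1.contains 0 &&
        t.all fun y => s.1.contains (y / 3))) &&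
    ((List.range 42).all fun y => y < 3 || (C.filter fun t => t.contains y).length == 1)

def dchkB (R : List (List (List ℕ))) : Bool :=
  (List.range 42).all fun u => u < 3 || (List.range 42).all fun v => v ≤ u || u / 3 == v / 3 ||
    ((R.map fun C => (C.filter fun t => t.contains u).flatten).filter
      fun l => l.contains v).length == 1

theorem filter_one_uniq {α : Type*} (p : α → Bool) (L : List α) (h : (L.filter p).length = 1) :
    (∃ (i : ℕ) (hi : i < L.length), p L[i] = true) ∧
    ∀ (i j : ℕ) (hi : i < L.length) (hj : j < L.length),
      p L[i] = true → p L[j] = true → i = j := by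
  constructor
  · obtain ⟨a, ha⟩ := List.length_eq_one_iff.1 h
    have : a ∈ L.filter p := by rw [ha]; simp
    obtain ⟨h1, h2⟩ := List.mem_filter.1 this
    obtain ⟨i, hi, rfl⟩ := List.getElem_of_mem h1
    exact ⟨i, hi, h2⟩
  · have key : ∀ (i j : ℕ) (hj : j < L.length) (hij : i < j),
        p L[i] = true → p L[j] = true → False := by
      intro i j hj hij hi' hj'
      have h1 : L.filter p = (L.take (i+1)).filter p ++ (L.drop (i+1)).filter p := by
        rw [← List.filter_append, List.take_append_drop]
      have h2 : L[i] ∈ (L.take (i+1)).filter p := by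
        rw [List.mem_filter]; refine ⟨?_, hi'⟩
        rw [List.mem_take_iff_getElem]; exact ⟨i, by omega, rfl⟩
      have h3 : L[j] ∈ (L.drop (i+1)).filter p := by
        rw [List.mem_filter]; refine ⟨?_, hj'⟩
        rw [List.mem_drop_iff_getElem]
        exact ⟨j - (i+1), by omega, by congr 1; omega⟩
      have h4 := List.length_pos_of_mem h2
      have h5 := List.length_pos_of_mem h3
      rw [h1, List.length_append] at h
      omega
    intro i j hi hj h1 h2
    rcases lt_trichotomy i j with h | h | h
    · exact (key i j hj h h1 h2).elim
    · exact h
    · exact (key j i hi h h2 h1).elim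

theorem mem_derived {x : ℕ} {b : Finset ℕ} :
    b ∈ derivedBlocks dBs x ↔ x ∉ b ∧ dBlk (insert x b) := by
  unfold derivedBlocks
  simp only [mem_image, mem_filter, mem_dBs]
  constructor
  · rintro ⟨c, ⟨h1, h2⟩, rfl⟩
    refine ⟨by simp, ?_⟩
    rwa [insert_erase h2]
  · rintro ⟨h1, h2⟩
    exact ⟨_, ⟨h2, mem_insert_self _ _⟩, erase_insert h1⟩

theorem base_good (i : ℕ) (hi : i < 3) (R : List (List (List ℕ)))
    (hA : dchkA i R = true) (hB : dchkB R = true) : dGood i := by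
  have hA1 : ∀ C ∈ R, (∀ t ∈ C, t.length = 3 ∧ (∀ y ∈ t, 3 ≤ y ∧ y < 42) ∧
      (t.map (· / 3)).Nodup ∧ ∃ s ∈ dSL, s.2 = (t.sum + i) % 3 ∧ 0 ∈ s.1 ∧
        ∀ y ∈ t, y / 3 ∈ s.1) ∧
      ∀ y, 3 ≤ y → y < 42 → (C.filter fun t => t.contains y).length = 1 := by
    intro C hC
    have h := List.all_eq_true.1 hA C hC
    rw [Bool.and_eq_true] at h
    refine ⟨fun t ht => ?_, fun y h3 h42 => ?_⟩
    · have := List.all_eq_true.1 h.1 t ht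
      simp only [Bool.and_eq_true, beq_iff_eq, List.all_eq_true, List.any_eq_true,
        decide_eq_true_eq, List.contains_iff_mem] at this
      obtain ⟨⟨⟨h1, h2⟩, h3⟩, s, hs, ⟨h4, h5⟩, h6⟩ := this
      exact ⟨h1, h2, h3, s, hs, h4, h5, h6⟩
    · have := List.all_eq_true.1 h.2 y (List.mem_range.2 h42)
      simp only [Bool.or_eq_true, decide_eq_true_eq, beq_iff_eq] at this
      exact this.resolve_left (by omega)
  have hB1 : ∀ u v, 3 ≤ u → u < v → v < 42 → u / 3 ≠ v / 3 →
      ((R.map fun C => (C.filter fun t => t.contains u).flatten).filter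
        fun l => l.contains v).length = 1 := by
    intro u v h1 h2 h3 h4
    have h := List.all_eq_true.1 hB u (List.mem_range.2 (by omega))
    rw [Bool.or_eq_true, decide_eq_true_eq] at h
    have h := List.all_eq_true.1 (h.resolve_left (by omega)) v (List.mem_range.2 h3)
    simp only [Bool.or_eq_true, decide_eq_true_eq, beq_iff_eq] at h
    exact h.resolve_left (by omega)
  -- each triple gives a derived block
  have hblk : ∀ C ∈ R, ∀ t ∈ C, i ∉ t.toFinset ∧ dBlk (insert i t.toFinset) := by
    intro C hC t ht
    obtain ⟨h3, hr, hnd, s, hs, hsum, h0, hm⟩ := (hA1 C hC).1 t ht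
    have hit : i ∉ t.toFinset := by
      intro h; have := (hr i (List.mem_toFinset.1 h)).1; omega
    have htn : t.Nodup := List.Nodup.of_map _ hnd
    have htc : t.toFinset.card = 3 := by rw [List.toFinset_card_of_nodup htn, h3]
    have h4 : (insert i t.toFinset).card = 4 := by rw [card_insert_of_notMem hit, htc]
    refine ⟨hit, ?_, h4, s, hs, ?_, ?_⟩
    · intro x hx
      rw [mem_insert, List.mem_toFinset] at hx
      rcases hx with rfl | hx
      · exact mem_range.2 (by omega)
      · exact mem_range.2 (hr x hx).2
    · have hi0 : i / 3 = 0 := by omega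
      apply Finset.eq_of_subset_of_card_le
      · intro z hz
        obtain ⟨x, hx, rfl⟩ := mem_image.1 hz
        rw [mem_insert, List.mem_toFinset] at hx
        rw [List.mem_toFinset]
        rcases hx with rfl | hx
        · rwa [hi0]
        · exact hm x hx
      · rw [(dSL_wf s hs).1, image_insert, hi0]
        have e : t.toFinset.image (· / 3) = (t.map (· / 3)).toFinset := by
          ext; simp
        rw [e, card_insert_of_notMem, List.toFinset_card_of_nodup hnd, List.length_map, h3]
        rw [List.mem_toFinset, List.mem_map]
        rintro ⟨y, hy, h⟩
        have := (hr y hy).1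
        omega
    · rw [sum_insert hit, hsum, List.sum_toFinset _ htn, List.map_id', add_comm]
  refine ⟨R.length, fun k => ((R[k]).map List.toFinset).toFinset, ?_, ?_, ?_⟩
  · intro k
    have hC := List.getElem_mem (l := R) k.2
    constructor
    · intro b hb
      rw [List.mem_toFinset, List.mem_map] at hb
      obtain ⟨t, ht, rfl⟩ := hb
      intro y hy
      have := ((hA1 _ hC).1 t ht).2.1 y (List.mem_toFinset.1 hy)
      rw [mem_filter, mem_range]
      omega
    · intro y hy
      rw [mem_filter, mem_range] at hy
      have h := (hA1 _ hC).2 y (by omega) hy.1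
      obtain ⟨t, ht⟩ := List.length_eq_one_iff.1 h
      have key : ∀ t', t' ∈ R[(k : ℕ)] ∧ y ∈ t' ↔ t' = t := by
        intro t'
        rw [← List.mem_singleton, ← ht]
        simp only [List.mem_filter, List.contains_iff_mem]
      have h1 := (key t).2 rfl
      refine ⟨t.toFinset, ⟨?_, List.mem_toFinset.2 h1.2⟩, ?_⟩
      · exact List.mem_toFinset.2 (List.mem_map.2 ⟨t, h1.1, rfl⟩)
      · rintro b ⟨hb, hyb⟩
        obtain ⟨t', ht', rfl⟩ := List.mem_map.1 (List.mem_toFinset.1 hb)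
        rw [(key t').1 ⟨ht', List.mem_toFinset.1 hyb⟩]
  · intro k b hb
    have hC := List.getElem_mem (l := R) k.2
    obtain ⟨t, ht, rfl⟩ := List.mem_map.1 (List.mem_toFinset.1 hb)
    exact mem_derived.2 (hblk _ hC t ht)
  · intro b hb
    obtain ⟨hib, hblkb⟩ := mem_derived.1 hb
    have hinj := dBlk_inj hblkb
    have hc3 : b.card = 3 := by
      have := hblkb.2.1
      rw [card_insert_of_notMem hib] at this; omega
    have hr : ∀ y ∈ b, 3 ≤ y ∧ y < 42 := by
      intro y hy
      have h1 := mem_range.1 (hblkb.1 (mem_insert_of_mem hy))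
      refine ⟨?_, h1⟩
      by_contra hlt
      have : i = y := hinj (by simp) (by simp [hy]) (show i / 3 = y / 3 by omega)
      exact hib (this ▸ hy)
    obtain ⟨u, v, hu, hv, huv⟩ : ∃ u v, u ∈ b ∧ v ∈ b ∧ u < v := by
      obtain ⟨u, hu, v, hv, hne⟩ := Finset.one_lt_card.1 (show 1 < b.card by omega)
      rcases lt_or_gt_of_ne hne with h | h
      · exact ⟨u, v, hu, hv, h⟩
      · exact ⟨v, u, hv, hu, h⟩
    have hne : u / 3 ≠ v / 3 := fun h =>
      huv.ne (hinj (by simp [hu]) (by simp [hv]) h)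
    have hiu : i / 3 ≠ u / 3 := by have := hr u hu; omega
    have hiv : i / 3 ≠ v / 3 := by have := hr v hv; omega
    have hF := filter_one_uniq _ _ (hB1 u v (hr u hu).1 huv (hr v hv).2 hne)
    simp only [List.length_map, List.getElem_map, List.contains_iff_mem, List.mem_flatten,
      List.mem_filter] at hF
    obtain ⟨⟨k, hk, t, ⟨htC, hut⟩, hvt⟩, huniq⟩ := hF
    have hbt : ∀ C ∈ R, ∀ t ∈ C, u ∈ t → v ∈ t → t.toFinset = b := by
      intro C hC t ht hut hvt
      obtain ⟨h1, h2⟩ := hblk C hC t ht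
      have := (triple_exists i u v (by omega) (hr u hu).2 (hr v hv).2 hiu hiv hne).unique
        (y₁ := insert i t.toFinset) (y₂ := insert i b) ⟨h2, ?_⟩ ⟨hblkb, ?_⟩
      · rw [← erase_insert h1, this, erase_insert hib]
      · intro x; simp only [mem_insert, mem_singleton, List.mem_toFinset]
        rintro (rfl | rfl | rfl) <;> simp [*]
      · intro x; simp only [mem_insert, mem_singleton]
        rintro (rfl | rfl | rfl) <;> simp [*]
    refine ⟨⟨k, hk⟩, ?_, ?_⟩
    · exact List.mem_toFinset.2 (List.mem_map.2
        ⟨t, htC, hbt _ (List.getElem_mem hk) t htC hut hvt⟩)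
    · rintro ⟨j, hj⟩ hbj
      obtain ⟨t', ht', hb'⟩ := List.mem_map.1 (List.mem_toFinset.1 hbj)
      apply Fin.ext
      refine huniq j k hj hk ⟨t', ⟨ht', ?_⟩, ?_⟩ ⟨t, ⟨htC, hut⟩, hvt⟩
      · rw [← List.mem_toFinset, hb']; exact hu
      · rw [← List.mem_toFinset, hb']; exact hv

/-- point permutation induced by a permutation of the groups -/
def dsig (g : List ℕ) (p : ℕ) : ℕ := if p < 42 then 3 * g.getD (p / 3) 0 + p % 3 else p

def dok (g : List ℕ) : Bool :=
  ((List.range 14).all fun a => g.getD a 0 < 14 && g.getD (g.getD a 0) 0 == a) &&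
  dSL.all fun s => dSL.any fun s' => s'.2 == s.2 && s.1.all fun a => s'.1.contains (g.getD a 0)

theorem image_sig_mem {σ : ℕ → ℕ} (hσ : Function.Involutive σ) (b : Finset ℕ) (y : ℕ) :
    y ∈ b.image σ ↔ σ y ∈ b := by
  rw [mem_image]
  constructor
  · rintro ⟨x, hx, rfl⟩; rwa [hσ x]
  · intro h; exact ⟨_, h, hσ y⟩

theorem image_sig_inv {σ : ℕ → ℕ} (hσ : Function.Involutive σ) :
    Function.Involutive (Finset.image σ) := by
  intro b; ext y; rw [image_sig_mem hσ, image_sig_mem hσ, hσ]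

theorem resolvable_transport {σ : ℕ → ℕ} (hσ : Function.Involutive σ)
    {Y Y' : Finset ℕ} {B B' : Finset (Finset ℕ)}
    (hY : ∀ y, y ∈ Y' ↔ σ y ∈ Y) (hB : ∀ b, b ∈ B' ↔ b.image σ ∈ B)
    (h : Resolvable Y B) : Resolvable Y' B' := by
  classical
  have hf := image_sig_inv hσ
  obtain ⟨r, P, h1, h2, h3⟩ := h
  have hm : ∀ i b, b ∈ (P i).image (Finset.image σ) ↔ b.image σ ∈ P i := by
    intro i b
    rw [mem_image]
    constructor
    · rintro ⟨x, hx, rfl⟩; rwa [hf x]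
    · intro h; exact ⟨_, h, hf b⟩
  refine ⟨r, fun i => (P i).image (Finset.image σ), fun i => ⟨?_, ?_⟩, ?_, ?_⟩
  · intro b hb y hy
    rw [hY]
    apply (h1 i).1 _ ((hm i b).1 hb)
    rw [image_sig_mem hσ, hσ]; exact hy
  · intro y hy
    obtain ⟨b, ⟨hb1, hb2⟩, hb3⟩ := (h1 i).2 (σ y) ((hY y).1 hy)
    refine ⟨b.image σ, ⟨?_, ?_⟩, ?_⟩
    · rw [hm, hf b]; exact hb1
    · rw [image_sig_mem hσ]; exact hb2
    · rintro c ⟨hc1, hc2⟩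
      rw [← hb3 (c.image σ) ⟨(hm i c).1 hc1, ?_⟩, hf c]
      rw [image_sig_mem hσ, hσ]; exact hc2
  · intro i b hb
    rw [hB]; exact h2 i ((hm i b).1 hb)
  · intro b hb
    obtain ⟨i, hi, hu⟩ := h3 _ ((hB b).1 hb)
    exact ⟨i, (hm i b).2 hi, fun j hj => hu j ((hm j b).1 hj)⟩

theorem good_transport (g : List ℕ) (hg : dok g = true) (x : ℕ) (hx : x < 42)
    (h : dGood x) : dGood (dsig g x) := by
  unfold dok at hg
  rw [Bool.and_eq_true] at hg
  have g1 : ∀ a, a < 14 → g.getD a 0 < 14 ∧ g.getD (g.getD a 0) 0 = a := by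
    intro a ha
    have := List.all_eq_true.1 hg.1 a (List.mem_range.2 ha)
    simpa only [Bool.and_eq_true, decide_eq_true_eq, beq_iff_eq] using this
  have g2 : ∀ s ∈ dSL, ∃ s' ∈ dSL, s'.2 = s.2 ∧ ∀ a ∈ s.1, g.getD a 0 ∈ s'.1 := by
    intro s hs
    have := List.all_eq_true.1 hg.2 s hs
    simpa only [Bool.and_eq_true, decide_eq_true_eq, beq_iff_eq, List.any_eq_true,
      List.all_eq_true, List.contains_iff_mem] using this
  have hlt : ∀ p, p < 42 → dsig g p < 42 ∧ dsig g p / 3 = g.getD (p / 3) 0 ∧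
      dsig g p % 3 = p % 3 := by
    intro p hp
    have := (g1 (p / 3) (by omega)).1
    unfold dsig
    rw [if_pos hp]
    omega
  have hσ : Function.Involutive (dsig g) := by
    intro p
    by_cases hp : p < 42
    · obtain ⟨h1, h2, h3⟩ := hlt p hp
      obtain ⟨k1, k2, k3⟩ := hlt _ h1
      rw [h2, (g1 (p / 3) (by omega)).2] at k2
      omega
    · have : dsig g p = p := if_neg hp
      rw [this, this]
  have hge : ∀ p, dsig g p < 42 → p < 42 := fun p hp => by
    have := (hlt _ hp).1; rwa [hσ] at this
  have hb1 : ∀ b, dBlk b → dBlk (b.image (dsig g)) := by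
    rintro b ⟨hb1, hb2, s, hs, hi, hm⟩
    have hinj := dBlk_inj ⟨hb1, hb2, s, hs, hi, hm⟩
    obtain ⟨s', hs', he, hsub⟩ := g2 s hs
    have hc : (b.image (dsig g)).card = 4 := by
      rw [card_image_of_injective _ hσ.injective, hb2]
    refine ⟨?_, hc, s', hs', ?_, ?_⟩
    · intro y hy
      obtain ⟨p, hp, rfl⟩ := mem_image.1 hy
      exact mem_range.2 (hlt p (mem_range.1 (hb1 hp))).1
    · apply Finset.eq_of_subset_of_card_le
      · intro z hz
        obtain ⟨y, hy, rfl⟩ := mem_image.1 hz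
        obtain ⟨p, hp, rfl⟩ := mem_image.1 hy
        rw [List.mem_toFinset, (hlt p (mem_range.1 (hb1 hp))).2.1]
        apply hsub
        rw [← List.mem_toFinset, ← hi]; exact mem_image_of_mem _ hp
      · rw [(dSL_wf s' hs').1, card_image_of_injOn, hc]
        intro y hy z hz hyz
        obtain ⟨p, hp, rfl⟩ := mem_image.1 hy
        obtain ⟨q, hq, rfl⟩ := mem_image.1 hz
        have hp42 := mem_range.1 (hb1 hp)
        have hq42 := mem_range.1 (hb1 hq)
        replace hyz : dsig g p / 3 = dsig g q / 3 := hyz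
        rw [(hlt p hp42).2.1, (hlt q hq42).2.1] at hyz
        have : p / 3 = q / 3 := by
          rw [← (g1 (p / 3) (by omega)).2, hyz, (g1 (q / 3) (by omega)).2]
        rw [hinj hp hq this]
    · rw [he, ← hm, sum_image (fun a _ b _ h => hσ.injective h), Finset.sum_nat_mod,
        Finset.sum_nat_mod b 3 (fun p => p)]
      congr 1
      exact sum_congr rfl fun p hp => (hlt p (mem_range.1 (hb1 hp))).2.2
  have hb2 : ∀ b, dBlk (b.image (dsig g)) ↔ dBlk b :=
    fun b => ⟨fun h => by have := hb1 _ h; rwa [image_sig_inv hσ b] at this, hb1 b⟩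
  refine resolvable_transport hσ ?_ ?_ h
  · intro y
    simp only [mem_filter, mem_range]
    constructor
    · rintro ⟨h1, h2⟩
      refine ⟨(hlt y h1).1, fun h3 => h2 ?_⟩
      rw [(hlt x hx).2.1, ← h3, (hlt y h1).2.1, (g1 (y / 3) (by omega)).2]
    · rintro ⟨h1, h2⟩
      have hy := hge y h1
      refine ⟨hy, fun h3 => h2 ?_⟩
      rw [(hlt y hy).2.1, h3, (hlt x hx).2.1, (g1 (x / 3) (by omega)).2]
  · intro b
    rw [mem_derived, mem_derived, image_sig_mem hσ, ← hb2 (insert _ b), image_insert, hσ]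

def dg : List ℕ := [2, 8, 0, 4, 3, 10, 7, 6, 1, 13, 5, 12, 11, 9]
def dh : List ℕ := [3, 2, 1, 0, 12, 7, 8, 5, 6, 11, 13, 9, 4, 10]

theorem all_good (i : ℕ) (hi : i < 3) (h0 : dGood i) : ∀ a < 14, dGood (3 * a + i) := by
  have tr : ∀ g, dok g = true → ∀ a, a < 14 → dGood (3 * a + i) →
      dGood (3 * g.getD a 0 + i) := by
    intro g hg a ha h
    have := good_transport g hg _ (by omega) h
    unfold dsig at this
    rw [if_pos (by omega)] at this
    rwa [show (3 * a + i) / 3 = a by omega, show (3 * a + i) % 3 = i by omega] at this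
  have tg := tr dg (by decide +kernel)
  have th := tr dh (by decide +kernel)
  have a0 : dGood (3 * 0 + i) := by simpa using h0
  have a2 : dGood (3 * 2 + i) := tg 0 (by omega) a0
  have a1 : dGood (3 * 1 + i) := th 2 (by omega) a2
  have a8 : dGood (3 * 8 + i) := tg 1 (by omega) a1
  have a6 : dGood (3 * 6 + i) := th 8 (by omega) a8
  have a7 : dGood (3 * 7 + i) := tg 6 (by omega) a6
  have a5 : dGood (3 * 5 + i) := th 7 (by omega) a7
  have a10 : dGood (3 * 10 + i) := tg 5 (by omega) a5
  have a13 : dGood (3 * 13 + i) := th 10 (by omega) a10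
  have a9 : dGood (3 * 9 + i) := tg 13 (by omega) a13
  have a11 : dGood (3 * 11 + i) := th 9 (by omega) a9
  have a12 : dGood (3 * 12 + i) := tg 11 (by omega) a11
  have a4 : dGood (3 * 4 + i) := th 12 (by omega) a12
  have a3 : dGood (3 * 3 + i) := tg 4 (by omega) a4
  intro a ha
  interval_cases a <;> assumption

theorem dA0 : dchkA 0 dR0 = true := by decide +kernel
theorem dA1 : dchkA 1 dR1 = true := by decide +kernel
theorem dA2 : dchkA 2 dR2 = true := by decide +kernel
theorem dB0 : dchkB dR0 = true := by decide +kernel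
theorem dB1 : dchkB dR1 = true := by decide +kernel
theorem dB2 : dchkB dR2 = true := by decide +kernel

theorem good_all (x : ℕ) (hx : x < 42) : dGood x := by
  have h : dGood (x % 3) := by
    have h3 : x % 3 = 0 ∨ x % 3 = 1 ∨ x % 3 = 2 := by omega
    rcases h3 with h | h | h <;> rw [h]
    · exact base_good 0 (by omega) dR0 dA0 dB0
    · exact base_good 1 (by omega) dR1 dA1 dB1
    · exact base_good 2 (by omega) dR2 dA2 dB2
  have := all_good _ (Nat.mod_lt x (by omega)) h (x / 3) (by omega)
  rwa [Nat.div_add_mod] at this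

/-- There exists an RDGDD(3, 4, 42) of type 3^14. -/
theorem stmt_3 : ∃ X Gs Bs, IsRDGDD 3 {4} 3 14 X Gs Bs := by 
  refine ⟨range 42, dGs, dBs, dGDD, ?_⟩
  intro x hx G hG hxG
  have h := good_all x (mem_range.1 hx)
  obtain ⟨a, ha, hm⟩ := dGs_mem hG
  have e : (range 42 \ G) = (range 42).filter fun y => y / 3 ≠ x / 3 := by
    ext y
    rw [mem_sdiff, mem_filter, hm, (hm x).1 hxG]
  rw [e]
  exact h
end
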